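/- arXiv:2603.09008 — 3 statements merged into one kernel-verified Lean document; each statement's English description precedes it below -/
import Mathlib

section
/- Fix a constant c > 0. For each n, let I^{⌊cn⌋}_n be the number of inversions of the random permutation of [n] obtained by performing r = ⌊cn⌋ iterated random-to-top shuffles starting from the identity. Then (I^{⌊cn⌋}_n − n²(1 − e^{−2c})/4) / n^{3/2} converges in distribution, as n → ∞, to a centered normal random variable with variance (1 + 8e^{−3c} − 9(1+c)e^{−4c}) / 36. -/
open MeasureTheory ProbabilityTheory Filter Finset Topology
open scoped NNReal

/-- Move card `c` to the top (position `0`) of the deck `π`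
(where `π i` is the card in position `i`). -/
def moveToTop {n : ℕ} (c : Fin n) (π : Equiv.Perm (Fin n)) : Equiv.Perm (Fin n) :=
  π * ((π⁻¹ c).cycleRange)⁻¹

/-- The permutation (position `i` ↦ card in position `i`) obtained after performing
iterated random-to-top moves with selected cards `s 0, s 1, …`, starting from the
identity deck `(1, 2, …, n)`. -/
def rttPerm (n r : ℕ) (s : Fin r → Fin n) : Equiv.Perm (Fin n) :=
  (List.ofFn s).foldl (fun π c => moveToTop c π) 1

/-- Number of fixed points of a permutation. -/
def fixedPointCount {n : ℕ} (π : Equiv.Perm (Fin n)) : ℕ :=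
  (Finset.univ.filter fun i => π i = i).card

/-- Number of descents of a permutation. -/
def descentCount {n : ℕ} (π : Equiv.Perm (Fin n)) : ℕ :=
  (Finset.univ.filter fun p : Fin n × Fin n =>
    (p.1 : ℕ) + 1 = (p.2 : ℕ) ∧ π p.2 < π p.1).card

/-- Number of inversions of a permutation. -/
def inversionCount {n : ℕ} (π : Equiv.Perm (Fin n)) : ℕ :=
  (Finset.univ.filter fun p : Fin n × Fin n => p.1 < p.2 ∧ π p.2 < π p.1).card

/-- The number of distinct values among `s 0, …, s (r-1)` (the occupancy count `K^r_n`). -/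
def distinctCount (n r : ℕ) (s : Fin r → Fin n) : ℕ :=
  (Finset.univ.image s).card

/-- Probability of the event `p` under the uniform distribution on the finite type `α`. -/
noncomputable def unifProb {α : Type*} [Fintype α] (p : α → Prop) : ℝ :=
  (Nat.card {x : α // p x} : ℝ) / (Fintype.card α : ℝ)

/-- Expectation of `f` under the uniform distribution on the finite type `α`. -/
noncomputable def unifExpect {α : Type*} [Fintype α] (f : α → ℝ) : ℝ :=
  (∑ x, f x) / (Fintype.card α : ℝ)

/-- Variance of `f` under the uniform distribution on the finite type `α`. -/
noncomputable def unifVar {α : Type*} [Fintype α] (f : α → ℝ) : ℝ :=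
  unifExpect fun x => (f x - unifExpect f) ^ 2

/-- `max_{1 ≤ i ≤ k} π(i)`: the maximum card value (in `{1, …, n}`, i.e. `val + 1`)
among the first `k` positions of `π`. -/
def maxFirst (n k : ℕ) (π : Equiv.Perm (Fin n)) : ℕ :=
  (Finset.univ.filter fun i : Fin n => (i : ℕ) < k).sup fun i => (π i : ℕ) + 1

/-- The number of fixed points among the first `k` positions of `π`. -/
def fixedFirst (n k : ℕ) (π : Equiv.Perm (Fin n)) : ℕ :=
  (Finset.univ.filter fun i : Fin n => (i : ℕ) < k ∧ π i = i).card

/-!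
Read the shuffles from the last one back to the first. The card selected last lies on top, so it is
inverted with exactly the smaller cards still under consideration, and can then be forgotten. Its
rank among the cards not yet selected is uniform, hence the generating function of the inversions is
an iterate of an averaging operator acting on functions of the number `e` of unselected cards.

In the coordinates `x = e / n` and `s = k / n`, where `k` counts the shuffles still to be read, the
iterates at `z = exp (i t / n ^ (3 / 2))` are approximated by the Gaussian ansatz
`exp (i t √n m(x, s) - t² v(x, s) / 2)`. Expanding one step, the terms of relative order
`n ^ (-1/2)` and `n ^ (-1)` average out to order `n ^ (-3/2)` exactly when `m` and `v` solve two
transport equations, which have explicit solutions. The operator is nonexpansive in the supremum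
norm, so the errors accumulated over `c n` steps are `O(n ^ (-1/2))`, and the limiting variance is
`v(1, c)`.
-/

section MoveToTop

variable {n : ℕ} {u a b : Fin n}

lemma cycleRange_self_lt (h : a ≠ u) : u.cycleRange u < u.cycleRange a := by
  cases n with
  | zero => exact u.elim0
  | succ n =>
    obtain ⟨a, rfl⟩ := Fin.exists_succAbove_eq h
    rw [Fin.cycleRange_self, Fin.cycleRange_succAbove]
    exact a.succ_pos

lemma cycleRange_lt_cycleRange_iff (ha : a ≠ u) (hb : b ≠ u) :
    u.cycleRange a < u.cycleRange b ↔ a < b := by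
  cases n with
  | zero => exact u.elim0
  | succ n =>
    obtain ⟨a, rfl⟩ := Fin.exists_succAbove_eq ha
    obtain ⟨b, rfl⟩ := Fin.exists_succAbove_eq hb
    simp only [Fin.cycleRange_succAbove, Fin.succ_lt_succ_iff, Fin.succAbove_lt_succAbove_iff]

variable (π : Equiv.Perm (Fin n))

lemma moveToTop_inv_apply (u a : Fin n) :
    (moveToTop u π)⁻¹ a = (π⁻¹ u).cycleRange (π⁻¹ a) := by
  simp only [moveToTop, mul_inv_rev, inv_inv, Equiv.Perm.mul_apply]

lemma moveToTop_inv_self_lt (h : a ≠ u) : (moveToTop u π)⁻¹ u < (moveToTop u π)⁻¹ a := by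
  simpa only [moveToTop_inv_apply] using cycleRange_self_lt (π⁻¹.injective.ne h)

lemma moveToTop_inv_lt_iff (ha : a ≠ u) (hb : b ≠ u) :
    (moveToTop u π)⁻¹ a < (moveToTop u π)⁻¹ b ↔ π⁻¹ a < π⁻¹ b := by
  simpa only [moveToTop_inv_apply] using
    cycleRange_lt_cycleRange_iff (π⁻¹.injective.ne ha) (π⁻¹.injective.ne hb)

/-- The number of inverted pairs of cards `a < b` of the deck `π` with both cards in `B`. Pairs are
indexed by their values rather than by their positions. -/
def inversionsAmong (B : Finset (Fin n)) (π : Equiv.Perm (Fin n)) : ℕ :=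
  ((B ×ˢ B).filter fun p => p.1 < p.2 ∧ π⁻¹ p.2 < π⁻¹ p.1).card

lemma inversionCount_eq_inversionsAmong_univ : inversionCount π = inversionsAmong univ π := by
  refine card_bij' (fun p _ => (π p.2, π p.1)) (fun p _ => (π⁻¹ p.2, π⁻¹ p.1)) ?_ ?_ ?_ ?_ <;>
    simp +contextual

lemma inversionsAmong_one (B : Finset (Fin n)) : inversionsAmong B 1 = 0 := by
  simp only [inversionsAmong, card_eq_zero, filter_eq_empty_iff, inv_one, Equiv.Perm.one_apply]
  exact fun p _ h => h.1.asymm h.2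

variable {B : Finset (Fin n)}

lemma inversionsAmong_moveToTop_of_notMem (hu : u ∉ B) :
    inversionsAmong B (moveToTop u π) = inversionsAmong B π := by
  refine congrArg card (filter_congr fun p hp => and_congr_right' ?_)
  rw [mem_product] at hp
  exact moveToTop_inv_lt_iff π (ne_of_mem_of_not_mem hp.2 hu) (ne_of_mem_of_not_mem hp.1 hu)

lemma inversionsAmong_moveToTop_of_mem (hu : u ∈ B) :
    inversionsAmong B (moveToTop u π) =
      (B.filter (· < u)).card + inversionsAmong (B.erase u) π := by
  rw [← inversionsAmong_moveToTop_of_notMem π (B.notMem_erase u), inversionsAmong,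
    ← card_filter_add_card_filter_not (fun p => p.2 = u), filter_filter, filter_filter]
  congr 1
  · refine card_bij' (fun p _ => p.1) (fun a _ => (a, u)) ?_ ?_ ?_ ?_
    · grind
    · intro a ha
      have inverted := moveToTop_inv_self_lt π (mem_filter.1 ha).2.ne
      grind
    · grind
    · simp
  · refine congrArg card (Finset.ext fun ⟨a, b⟩ => ?_)
    have not_inverted : (moveToTop u π)⁻¹ b < (moveToTop u π)⁻¹ u → b = u :=
      fun h => not_imp_comm.1 (moveToTop_inv_self_lt π) h.asymm
    simp only [mem_filter, mem_product, mem_erase]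
    grind

lemma rttPerm_snoc (n r : ℕ) (s : Fin r → Fin n) (u : Fin n) :
    rttPerm n (r + 1) (Fin.snoc s u : Fin (r + 1) → Fin n) = moveToTop u (rttPerm n r s) := by
  simp only [rttPerm, List.ofFn_succ', List.concat_eq_append, List.foldl_append, Fin.snoc_castSucc,
    Fin.snoc_last, List.foldl_cons, List.foldl_nil]

end MoveToTop

lemma sum_card_filter_lt {α M : Type*} [LinearOrder α] [AddCommMonoid M] (S : Finset α)
    (f : ℕ → M) : ∑ u ∈ S, f (S.filter (· < u)).card = ∑ j ∈ range S.card, f j := by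
  induction S using Finset.induction_on_max with
  | empty => simp
  | insert m S hm ih =>
    have hmS : m ∉ S := fun h => lt_irrefl _ (hm m h)
    rw [sum_insert hmS, card_insert_of_notMem hmS, sum_range_succ, ← ih, add_comm]
    congr 1
    · refine sum_congr rfl fun u hu => ?_
      rw [filter_insert, if_neg (hm u hu).not_gt]
    · rw [filter_insert, if_neg (lt_irrefl m), filter_true_of_mem hm]

lemma sum_range_ite_lt {M : Type*} [AddCommMonoid M] {e n : ℕ} (he : e ≤ n) (f : ℕ → M) (c : M) :
    ∑ u ∈ range n, (if u < e then f u else c) = ∑ u ∈ range e, f u + (n - e) • c := by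
  rw [← sum_range_add_sum_Ico _ he]
  congr 1
  · exact sum_congr rfl fun u hu => if_pos (mem_range.1 hu)
  · rw [sum_congr rfl fun u hu => if_neg (mem_Ico.1 hu).1.not_gt, sum_const, Nat.card_Ico]

/-- The operator `φ ↦ (e ↦ 𝔼 [z ^ u φ(e - 1); u < e] + 𝔼 [φ e; u ≥ e])` with `u` uniform on
`{0, …, n - 1}`. Reading the shuffles backwards, `e` is the number of cards that have not been
selected yet; the selected card is one of them if `u < e`, and then `u` is its rank. -/
noncomputable def shuffleStep (n : ℕ) (z : ℂ) (φ : ℕ → ℂ) (e : ℕ) : ℂ :=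
  (∑ u ∈ range n, if u < e then z ^ u * φ (e - 1) else φ e) / n

lemma sum_pow_inversionsAmong (n r : ℕ) (z : ℂ) (B : Finset (Fin n)) :
    ∑ s : Fin r → Fin n, z ^ inversionsAmong B (rttPerm n r s) =
      n ^ r * (shuffleStep n z)^[r] (fun _ => 1) B.card := by
  induction r generalizing B with
  | zero => simp [rttPerm, inversionsAmong_one]
  | succ r ih =>
    set G := (shuffleStep n z)^[r] fun _ => 1
    have sum_first_shuffles (u : Fin n) :
        ∑ s : Fin r → Fin n, z ^ inversionsAmong B (moveToTop u (rttPerm n r s)) =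
          n ^ r * if u ∈ B then z ^ (B.filter (· < u)).card * G (B.card - 1) else G B.card := by
      split_ifs with hu
      · simp only [inversionsAmong_moveToTop_of_mem _ hu, pow_add, ← mul_sum, ih,
          card_erase_of_mem hu, G]
        ring
      · simp only [inversionsAmong_moveToTop_of_notMem _ hu, ih, G]
    calc ∑ s : Fin (r + 1) → Fin n, z ^ inversionsAmong B (rttPerm n (r + 1) s)
        = ∑ u : Fin n, ∑ s : Fin r → Fin n,
            z ^ inversionsAmong B (moveToTop u (rttPerm n r s)) := by
          rw [← (Fin.snocEquiv fun _ : Fin (r + 1) => Fin n).sum_comp, Fintype.sum_prod_type]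
          exact sum_congr rfl fun u _ => sum_congr rfl fun s _ => by rw [← rttPerm_snoc]; rfl
      _ = n ^ r * ∑ u : Fin n,
            if u ∈ B then z ^ (B.filter (· < u)).card * G (B.card - 1) else G B.card := by
          simp only [sum_first_shuffles, mul_sum]
      _ = n ^ r * ∑ u ∈ range n, if u < B.card then z ^ u * G (B.card - 1) else G B.card := by
          rw [sum_range_ite_lt (by simpa using B.card_le_univ), sum_ite, filter_mem_eq_inter,
            univ_inter, sum_card_filter_lt B fun j => z ^ j * G (B.card - 1), sum_const,
            filter_not, filter_mem_eq_inter, univ_inter, ← compl_eq_univ_sdiff, card_compl,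
            Fintype.card_fin]
      _ = n ^ (r + 1) * (shuffleStep n z)^[r + 1] (fun _ => 1) B.card := by
          rcases eq_or_ne n 0 with rfl | hn
          · simp
          · rw [Function.iterate_succ_apply', shuffleStep, pow_succ, mul_assoc,
              mul_div_cancel₀ _ (Nat.cast_ne_zero.2 hn)]

lemma sum_pow_inversionCount (n r : ℕ) (z : ℂ) :
    ∑ s : Fin r → Fin n, z ^ inversionCount (rttPerm n r s) =
      n ^ r * (shuffleStep n z)^[r] (fun _ => 1) n := by
  simpa only [inversionCount_eq_inversionsAmong_univ, card_univ, Fintype.card_fin] using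
    sum_pow_inversionsAmong n r z univ

lemma norm_shuffleStep_sub_le {n e : ℕ} {z : ℂ} {φ ψ : ℕ → ℂ} {δ : ℝ} (hz : ‖z‖ ≤ 1) (he : e ≤ n)
    (h : ∀ e ≤ n, ‖φ e - ψ e‖ ≤ δ) : ‖shuffleStep n z φ e - shuffleStep n z ψ e‖ ≤ δ := by
  have term_le (u : ℕ) : ‖(if u < e then z ^ u * φ (e - 1) else φ e) -
      (if u < e then z ^ u * ψ (e - 1) else ψ e)‖ ≤ δ := by
    split_ifs
    · rw [← mul_sub, norm_mul, norm_pow]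
      exact (mul_le_of_le_one_left (norm_nonneg _) (pow_le_one₀ (norm_nonneg z) hz)).trans
        (h _ ((e.sub_le 1).trans he))
    · exact h e he
  have δ_nonneg : 0 ≤ δ := (norm_nonneg _).trans (h e he)
  rw [shuffleStep, shuffleStep, ← sub_div, ← sum_sub_distrib, norm_div, RCLike.norm_natCast]
  refine div_le_of_le_mul₀ n.cast_nonneg δ_nonneg
    ((norm_sum_le_of_le _ fun u _ => term_le u).trans_eq ?_)
  rw [sum_const, card_range, nsmul_eq_mul, mul_comm]

lemma norm_iterate_shuffleStep_sub_le {n r : ℕ} {z : ℂ} {φ : ℕ → ℕ → ℂ} {ε : ℝ} (hz : ‖z‖ ≤ 1)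
    (h : ∀ k < r, ∀ e ≤ n, ‖shuffleStep n z (φ k) e - φ (k + 1) e‖ ≤ ε) :
    ∀ e ≤ n, ‖(shuffleStep n z)^[r] (φ 0) e - φ r e‖ ≤ r * ε := by
  induction r with
  | zero => simp
  | succ r ih =>
    intro e he
    have propagated := norm_shuffleStep_sub_le hz he (ih fun k hk => h k (hk.trans r.lt_succ_self))
    have committed := h r r.lt_succ_self e he
    rw [Function.iterate_succ_apply', Nat.cast_succ, add_one_mul]
    exact (norm_sub_le_norm_sub_add_norm_sub _ _ _).trans (add_le_add propagated committed)

section Taylor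

variable {E F : Type*} [NormedAddCommGroup E] [NormedSpace ℝ E] [NormedAddCommGroup F]
  [NormedSpace ℝ F] {f : E → F} {S : Set E}

lemma eventually_norm_sub_sub_fderiv_le (hf : ContDiff ℝ 2 f) (hS : IsCompact S)
    (hS' : Convex ℝ S) :
    ∀ᶠ K in atTop, ∀ p ∈ S, ∀ q ∈ S, ‖f q - f p - fderiv ℝ f p (q - p)‖ ≤ K * ‖q - p‖ ^ 2 := by
  obtain ⟨L, hL⟩ := (hf.fderiv_right (m := 1) (by norm_num)).contDiffOn.exists_lipschitzOnWith
    one_ne_zero hS' hS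
  filter_upwards [eventually_ge_atTop (L : ℝ)] with K hK p hp q hq
  have fderiv_sub_le : ∀ x ∈ segment ℝ p q, ‖fderiv ℝ f x - fderiv ℝ f p‖ ≤ L * ‖q - p‖ := by
    intro x hx
    have x_near_p : ‖x - p‖ ≤ ‖q - p‖ := by
      simpa [dist_eq_norm, norm_sub_rev q p] using segment_subset_closedBall_left p q hx
    exact (hL.norm_sub_le (hS'.segment_subset hp hq hx) hp).trans (by gcongr)
  calc ‖f q - f p - fderiv ℝ f p (q - p)‖
      ≤ L * ‖q - p‖ * ‖q - p‖ :=
        (convex_segment p q).norm_image_sub_le_of_norm_fderiv_le'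
          (fun x _ => (hf.differentiable two_ne_zero).differentiableAt) fderiv_sub_le
          (left_mem_segment ℝ p q) (right_mem_segment ℝ p q)
    _ ≤ K * ‖q - p‖ ^ 2 := by rw [mul_assoc, ← sq]; gcongr

lemma eventually_norm_sub_add_smul_fderiv_le (hf : ContDiff ℝ 2 f) (hS : IsCompact S)
    (hS' : Convex ℝ S) :
    ∀ᶠ K in atTop, ∀ p ∈ S, ∀ w, ‖w‖ ≤ 1 → ∀ δ : ℝ, p - δ • w ∈ S →
      ‖f (p - δ • w) - f p + δ • fderiv ℝ f p w‖ ≤ K * δ ^ 2 := by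
  filter_upwards [eventually_norm_sub_sub_fderiv_le hf hS hS', eventually_ge_atTop 0]
    with K hK K_nonneg p hp w hw δ hq
  have norm_step : ‖δ • w‖ ≤ |δ| := by
    rw [norm_smul, Real.norm_eq_abs]
    exact mul_le_of_le_one_right (abs_nonneg δ) hw
  calc ‖f (p - δ • w) - f p + δ • fderiv ℝ f p w‖
      = ‖f (p - δ • w) - f p - fderiv ℝ f p (p - δ • w - p)‖ := by
        rw [sub_sub_cancel_left, map_neg, map_smul, sub_neg_eq_add]
    _ ≤ K * ‖p - δ • w - p‖ ^ 2 := hK p hp _ hq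
    _ ≤ K * δ ^ 2 := by
        rw [sub_sub_cancel_left, norm_neg, ← sq_abs δ]
        gcongr

lemma eventually_norm_fderiv_apply_le (hf : ContDiff ℝ 1 f) (hS : IsCompact S) :
    ∀ᶠ K in atTop, ∀ p ∈ S, ∀ w, ‖w‖ ≤ 1 → ‖fderiv ℝ f p w‖ ≤ K := by
  obtain ⟨L, hL⟩ := hS.exists_bound_of_continuousOn (hf.continuous_fderiv one_ne_zero).continuousOn
  filter_upwards [eventually_ge_atTop L] with K hK p hp w hw
  exact ((fderiv ℝ f p).unit_le_opNorm w hw).trans ((hL p hp).trans hK)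

end Taylor

lemma exists_norm_cexp_sub_quadratic_le (K : ℝ) :
    ∃ C, ∀ (h : ℝ) (a b z : ℂ), 0 ≤ h → h ≤ 1 → ‖a‖ ≤ K → ‖b‖ ≤ K →
      ‖z - (h * a + h ^ 2 * b)‖ ≤ K * h ^ 3 →
      ‖Complex.exp z - (1 + h * a + h ^ 2 * (b + a ^ 2 / 2))‖ ≤ C * h ^ 3 := by
  refine ⟨(3 * K) ^ 3 * Real.exp (3 * K) + K + 4 * K ^ 2, fun h a b z h0 h1 ha hb hz => ?_⟩
  have hK : 0 ≤ K := (norm_nonneg a).trans ha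
  have norm_h : ‖(h : ℂ)‖ = h := Complex.norm_of_nonneg h0
  have norm_ha : ‖h * a‖ ≤ K * h := by rw [norm_mul, norm_h, mul_comm]; gcongr
  have norm_z_sub : ‖z - h * a‖ ≤ 2 * K * h ^ 2 := calc
    ‖z - h * a‖ = ‖z - (h * a + h ^ 2 * b) + h ^ 2 * b‖ := by congr 1; ring
    _ ≤ K * h ^ 3 + h ^ 2 * K := by
      refine (norm_add_le _ _).trans (add_le_add hz ?_)
      rw [norm_mul, norm_pow, norm_h]
      gcongr
    _ ≤ 2 * K * h ^ 2 := by nlinarith [mul_nonneg hK (sq_nonneg h)]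
  have norm_z : ‖z‖ ≤ 3 * K * h := calc
    ‖z‖ = ‖z - h * a + h * a‖ := by rw [sub_add_cancel]
    _ ≤ 2 * K * h ^ 2 + K * h := (norm_add_le _ _).trans (add_le_add norm_z_sub norm_ha)
    _ ≤ 3 * K * h := by nlinarith [mul_nonneg hK h0]
  have norm_z_add : ‖z + h * a‖ ≤ 4 * K * h := (norm_add_le _ _).trans (by linarith)
  have exp_sub : ‖Complex.exp z - (1 + z + z ^ 2 / 2)‖ ≤ (3 * K * h) ^ 3 * Real.exp (3 * K) := by
    refine le_trans
      (by simpa [sum_range_succ] using Complex.norm_exp_sub_sum_le_norm_mul_exp z 3) ?_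
    gcongr
    exact norm_z.trans (mul_le_of_le_one_right (by positivity) h1)
  calc ‖Complex.exp z - (1 + h * a + h ^ 2 * (b + a ^ 2 / 2))‖
      = ‖Complex.exp z - (1 + z + z ^ 2 / 2) + (z - (h * a + h ^ 2 * b))
          + (z - h * a) * (z + h * a) / 2‖ := by congr 1; ring
    _ ≤ (3 * K * h) ^ 3 * Real.exp (3 * K) + K * h ^ 3 + 2 * K * h ^ 2 * (4 * K * h) / 2 := by
      refine norm_add₃_le.trans (add_le_add_three exp_sub hz ?_)
      rw [norm_div, norm_mul, RCLike.norm_ofNat]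
      gcongr
    _ = _ := by ring

lemma exists_norm_cexp_increment_sub_le (t K : ℝ) :
    ∃ C, ∀ h y Δm Δv m' v' : ℝ, 0 < h → h ≤ 1 → |y| ≤ 1 → |m'| ≤ K → |v'| ≤ K →
      |Δm + h ^ 2 * m'| ≤ K * (h ^ 2) ^ 2 → |Δv + h ^ 2 * v'| ≤ K * (h ^ 2) ^ 2 →
      ‖Complex.exp (t * (h⁻¹ * Δm + h * y) * Complex.I - t ^ 2 / 2 * Δv)
        - (1 + h * (t * (y - m') * Complex.I)
          + h ^ 2 * (t ^ 2 / 2 * (v' - (y - m') ^ 2)))‖ ≤ C * h ^ 3 := by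
  obtain ⟨C, hC⟩ := exists_norm_cexp_sub_quadratic_le ((|t| + t ^ 2 / 2) * (1 + K))
  refine ⟨C, fun h y Δm Δv m' v' h0 h1 hy hm' hv' hm hv => ?_⟩
  have hK : 0 ≤ K := (abs_nonneg _).trans hm'
  have norm_a : ‖(t * (y - m') * Complex.I : ℂ)‖ ≤ (|t| + t ^ 2 / 2) * (1 + K) := by
    rw [norm_mul, Complex.norm_I, mul_one, ← Complex.ofReal_sub, norm_mul, Complex.norm_real,
      Complex.norm_real]
    exact mul_le_mul (le_add_of_nonneg_right (by positivity))
      ((abs_sub _ _).trans (add_le_add hy hm')) (abs_nonneg _) (by positivity)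
  have norm_b : ‖(t ^ 2 / 2 * v' : ℂ)‖ ≤ (|t| + t ^ 2 / 2) * (1 + K) := by
    rw [norm_mul, norm_div, norm_pow, Complex.norm_real, Complex.norm_real, RCLike.norm_ofNat,
      Real.norm_eq_abs, sq_abs]
    exact mul_le_mul (le_add_of_nonneg_left (abs_nonneg t)) (hv'.trans (by linarith))
      (abs_nonneg _) (by positivity)
  have norm_rem : ‖(t * (h⁻¹ * (Δm + h ^ 2 * m') : ℝ) * Complex.I
      - t ^ 2 / 2 * (Δv + h ^ 2 * v' : ℝ) : ℂ)‖ ≤ (|t| + t ^ 2 / 2) * (1 + K) * h ^ 3 := by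
    have hm : |h⁻¹ * (Δm + h ^ 2 * m')| ≤ (1 + K) * h ^ 3 := by
      rw [abs_mul, abs_inv, abs_of_pos h0, inv_mul_le_iff₀ h0]
      nlinarith [pow_pos h0 4]
    have hv : |Δv + h ^ 2 * v'| ≤ (1 + K) * h ^ 3 := by
      nlinarith [pow_pos h0 3, mul_le_mul_of_nonneg_left h1 (mul_nonneg hK (pow_pos h0 3).le)]
    calc _ ≤ |t| * |h⁻¹ * (Δm + h ^ 2 * m')| + t ^ 2 / 2 * |Δv + h ^ 2 * v'| := by
          refine (norm_sub_le _ _).trans_eq ?_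
          rw [norm_mul, norm_mul, norm_mul, norm_div, norm_pow, Complex.norm_I, mul_one,
            Complex.norm_real, Complex.norm_real, Complex.norm_real, RCLike.norm_ofNat,
            Real.norm_eq_abs, sq_abs, Real.norm_eq_abs, Real.norm_eq_abs]
      _ ≤ |t| * ((1 + K) * h ^ 3) + t ^ 2 / 2 * ((1 + K) * h ^ 3) := by gcongr
      _ = _ := by ring
  convert hC h _ _ _ h0.le h1 norm_a norm_b ?_ using 3
  · linear_combination (-(h : ℂ) ^ 2 * t ^ 2 / 2 * (y - m') ^ 2) * Complex.I_sq
  · convert norm_rem using 2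
    have : (h : ℂ) ≠ 0 := Complex.ofReal_ne_zero.2 h0.ne'
    push_cast
    field_simp
    ring

/-- The characteristic function at `t` of the normal law with mean `h⁻¹ m(p)` and
variance `v(p)`. -/
noncomputable def gaussianAnsatz {E : Type*} (m v : E → ℝ) (t h : ℝ) (p : E) : ℂ :=
  Complex.exp (t * (h⁻¹ * m p) * Complex.I - t ^ 2 / 2 * v p)

lemma norm_gaussianAnsatz_le_one {E : Type*} {m v : E → ℝ} {p : E} (hv : 0 ≤ v p) (t h : ℝ) :
    ‖gaussianAnsatz m v t h p‖ ≤ 1 := by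
  rw [gaussianAnsatz, Complex.norm_exp, Real.exp_le_one_iff]
  have : 0 ≤ t ^ 2 / 2 * v p := by positivity
  simpa [← Complex.ofReal_pow, ← Complex.ofReal_inv, ← Complex.ofReal_mul] using this

lemma exists_norm_gaussianAnsatz_increment_sub_le {E : Type*} [NormedAddCommGroup E]
    [NormedSpace ℝ E] {m v : E → ℝ} {S : Set E} (hm : ContDiff ℝ 2 m)
    (hv : ContDiff ℝ 2 v) (hS : IsCompact S) (hS' : Convex ℝ S) (t : ℝ) :
    ∃ C, ∀ (h y : ℝ) (p w : E), 0 < h → h ≤ 1 → |y| ≤ 1 → ‖w‖ ≤ 1 → p ∈ S → p - h ^ 2 • w ∈ S →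
      ‖Complex.exp (t * (h * y) * Complex.I) * gaussianAnsatz m v t h (p - h ^ 2 • w)
        - (1 + h * (t * (y - fderiv ℝ m p w) * Complex.I)
          + h ^ 2 * (t ^ 2 / 2 * (fderiv ℝ v p w - (y - fderiv ℝ m p w) ^ 2)))
          * gaussianAnsatz m v t h p‖ ≤ C * h ^ 3 * ‖gaussianAnsatz m v t h p‖ := by
  obtain ⟨K, remainder_m, remainder_v, bound_m, bound_v⟩ :=
    ((eventually_norm_sub_add_smul_fderiv_le hm hS hS').and <|
      (eventually_norm_sub_add_smul_fderiv_le hv hS hS').and <|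
      (eventually_norm_fderiv_apply_le (hm.of_le one_le_two) hS).and <|
      eventually_norm_fderiv_apply_le (hv.of_le one_le_two) hS).exists
  obtain ⟨C, hC⟩ := exists_norm_cexp_increment_sub_le t K
  refine ⟨C, fun h y p w h0 h1 hy hw hp hq => ?_⟩
  have relative := hC h y _ _ _ _ h0 h1 hy (bound_m p hp w hw) (bound_v p hp w hw)
    (remainder_m p hp w hw _ hq) (remainder_v p hp w hw _ hq)
  refine le_trans (le_of_eq ?_) (mul_le_mul_of_nonneg_right relative (norm_nonneg _))
  rw [← norm_mul, sub_mul, gaussianAnsatz, gaussianAnsatz, ← Complex.exp_add, ← Complex.exp_add]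
  congr 3
  push_cast
  ring

section Profiles

/-- With `x n` unselected cards and `s n` shuffles still to be read, `n ^ 2` times this is the
expected number of inversions to come, to leading order. -/
noncomputable def meanProfile (p : ℝ × ℝ) : ℝ :=
  p.1 ^ 2 * (1 - Real.exp (-2 * p.2)) / 4

/-- With `x n` unselected cards and `s n` shuffles still to be read, `n ^ 3` times this is the
variance of the number of inversions to come, to leading order. -/
noncomputable def varProfile (p : ℝ × ℝ) : ℝ :=
  p.1 ^ 3 / 36 + 2 / 9 * p.1 ^ 3 * Real.exp (-3 * p.2)
    - p.1 ^ 3 * (1 + p.1 * p.2) * Real.exp (-4 * p.2) / 4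

lemma contDiff_meanProfile : ContDiff ℝ 2 meanProfile := by
  unfold meanProfile
  fun_prop

lemma contDiff_varProfile : ContDiff ℝ 2 varProfile := by
  unfold varProfile
  fun_prop

lemma varProfile_nonneg {p : ℝ × ℝ} (hp₁ : p.1 ∈ Set.Icc 0 1) (hp₂ : 0 ≤ p.2) :
    0 ≤ varProfile p := by
  obtain ⟨x, s⟩ := p
  obtain ⟨x_nonneg, x_le⟩ : 0 ≤ x ∧ x ≤ 1 := hp₁
  have s_nonneg : 0 ≤ s := hp₂
  have exp_le_one : Real.exp (-3 * s) ≤ 1 := Real.exp_le_one_iff.2 (by linarith)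
  have mul_exp_le : (1 + x * s) * Real.exp (-4 * s) ≤ Real.exp (-3 * s) := calc
    (1 + x * s) * Real.exp (-4 * s) ≤ Real.exp s * Real.exp (-4 * s) := by
      gcongr
      linarith [Real.add_one_le_exp s, mul_le_of_le_one_left s_nonneg x_le]
    _ = Real.exp (-3 * s) := by rw [← Real.exp_add]; ring_nf
  calc 0 ≤ x ^ 3 * (1 / 36 + 2 / 9 * Real.exp (-3 * s) - (1 + x * s) * Real.exp (-4 * s) / 4) :=
        mul_nonneg (pow_nonneg x_nonneg 3) (by linarith)
    _ = varProfile (x, s) := by rw [varProfile]; ring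

lemma hasDerivAt_add_mul_zero (x a : ℝ) : HasDerivAt (fun τ : ℝ => x + τ * a) a 0 := by
  simpa using ((hasDerivAt_id (0 : ℝ)).mul_const a).const_add x

lemma fderiv_meanProfile_apply (x s a b : ℝ) : fderiv ℝ meanProfile (x, s) (a, b) =
    x * (1 - Real.exp (-2 * s)) / 2 * a + x ^ 2 * Real.exp (-2 * s) / 2 * b := by
  have hx := hasDerivAt_add_mul_zero x a
  have hs := hasDerivAt_add_mul_zero s b
  rw [← (contDiff_meanProfile.differentiable two_ne_zero _).lineDeriv_eq_fderiv]
  refine (HasDerivAt.congr_deriv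
    (((hx.pow 2).mul ((hs.const_mul (-2)).exp.const_sub 1)).div_const 4) ?_).deriv
  simp only [Pi.pow_apply, zero_mul, add_zero]
  push_cast
  ring

lemma fderiv_varProfile_apply (x s a b : ℝ) : fderiv ℝ varProfile (x, s) (a, b) =
    (x ^ 2 / 12 + 2 / 3 * x ^ 2 * Real.exp (-3 * s) - 3 / 4 * x ^ 2 * Real.exp (-4 * s)
      - x ^ 3 * s * Real.exp (-4 * s)) * a
    + (-(2 / 3) * x ^ 3 * Real.exp (-3 * s) + x ^ 3 * Real.exp (-4 * s)
      + x ^ 4 * s * Real.exp (-4 * s) - x ^ 4 * Real.exp (-4 * s) / 4) * b := by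
  have hx := hasDerivAt_add_mul_zero x a
  have hs := hasDerivAt_add_mul_zero s b
  rw [← (contDiff_varProfile.differentiable two_ne_zero _).lineDeriv_eq_fderiv]
  refine (HasDerivAt.congr_deriv ((((hx.pow 3).div_const 36).add
    (((hx.pow 3).const_mul (2 / 9)).mul (hs.const_mul (-3)).exp)).sub
    ((((hx.pow 3).mul ((hx.mul hs).const_add 1)).mul (hs.const_mul (-4)).exp).div_const 4))
      ?_).deriv
  simp only [Pi.pow_apply, Pi.mul_apply, zero_mul, add_zero]
  push_cast
  ring

lemma integral_sub_sq (x a : ℝ) : ∫ u in (0 : ℝ)..x, (u - a) ^ 2 = ((x - a) ^ 3 + a ^ 3) / 3 := by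
  rw [intervalIntegral.integral_comp_sub_right (fun u => u ^ 2), integral_pow]
  ring

-- For `u` uniform on `[0, 1]`, a selected card of rank `u < x` adds `u` inversions and moves the
-- state back along `(1, 1)`; otherwise none are added and it moves along `(0, 1)`. The two
-- transport equations match the mean and the mean square of the resulting martingale increment.
lemma meanProfile_transport (x s : ℝ) :
    x * fderiv ℝ meanProfile (x, s) (1, 1) + (1 - x) * fderiv ℝ meanProfile (x, s) (0, 1) =
      ∫ u in (0 : ℝ)..x, u := by
  rw [fderiv_meanProfile_apply, fderiv_meanProfile_apply, integral_id]
  ring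

lemma varProfile_transport (x s : ℝ) :
    x * fderiv ℝ varProfile (x, s) (1, 1) + (1 - x) * fderiv ℝ varProfile (x, s) (0, 1) =
      (∫ u in (0 : ℝ)..x, (u - fderiv ℝ meanProfile (x, s) (1, 1)) ^ 2)
        + (1 - x) * fderiv ℝ meanProfile (x, s) (0, 1) ^ 2 := by
  have exp_four : Real.exp (-4 * s) = Real.exp (-2 * s) ^ 2 := by
    rw [← Real.exp_nat_mul]; ring_nf
  rw [fderiv_varProfile_apply, fderiv_varProfile_apply, integral_sub_sq, fderiv_meanProfile_apply,
    fderiv_meanProfile_apply, exp_four]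
  ring

end Profiles

lemma sum_range_div_sub {n : ℕ} (hn : n ≠ 0) (e : ℕ) (a : ℝ) :
    ∑ u ∈ range e, ((u : ℝ) / n - a) =
      n * ((∫ u in (0 : ℝ)..(e / n : ℝ), u) - e / n * a) - e / n / 2 := by
  have hn' : (n : ℝ) ≠ 0 := Nat.cast_ne_zero.2 hn
  rw [integral_id]
  induction e with
  | zero => simp
  | succ e ih =>
    rw [sum_range_succ, ih]
    push_cast
    field_simp
    ring

lemma sum_range_div_sub_sq {n : ℕ} (hn : n ≠ 0) (e : ℕ) (a : ℝ) :
    ∑ u ∈ range e, ((u : ℝ) / n - a) ^ 2 =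
      n * (∫ u in (0 : ℝ)..(e / n : ℝ), (u - a) ^ 2) - (e / n) ^ 2 / 2 + e / n * a
        + e / n / (6 * n) := by
  have hn' : (n : ℝ) ≠ 0 := Nat.cast_ne_zero.2 hn
  rw [integral_sub_sq]
  induction e with
  | zero => simp only [range_zero, sum_empty, Nat.cast_zero, zero_div]; ring
  | succ e ih =>
    rw [sum_range_succ, ih]
    push_cast
    field_simp
    ring

lemma abs_sum_mean_le {n e : ℕ} (hn : n ≠ 0) (he : e ≤ n) {m₀ m₁ : ℝ}
    (transport : e / n * m₁ + (1 - e / n) * m₀ = ∫ u in (0 : ℝ)..(e / n : ℝ), u) :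
    |∑ u ∈ range n, (if u < e then (u : ℝ) / n - m₁ else -m₀)| ≤ 1 := by
  have hn' : (0 : ℝ) < n := Nat.cast_pos.2 (Nat.pos_of_ne_zero hn)
  have x_le : (e / n : ℝ) ≤ 1 := div_le_one_of_le₀ (Nat.cast_le.2 he) hn'.le
  have sum_eq : ∑ u ∈ range n, (if u < e then (u : ℝ) / n - m₁ else -m₀) = -(e / n / 2) := by
    rw [sum_range_ite_lt he fun u => (u : ℝ) / n - m₁, sum_range_div_sub hn, ← transport,
      nsmul_eq_mul, Nat.cast_sub he]
    field_simp
    ring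
  rw [sum_eq, abs_neg, abs_of_nonneg (by positivity)]
  linarith

lemma abs_sum_variance_le {n e : ℕ} (hn : n ≠ 0) (he : e ≤ n) {m₀ m₁ v₀ v₁ : ℝ}
    (transport : e / n * v₁ + (1 - e / n) * v₀ =
      (∫ u in (0 : ℝ)..(e / n : ℝ), (u - m₁) ^ 2) + (1 - e / n) * m₀ ^ 2) :
    |∑ u ∈ range n, (if u < e then v₁ - ((u : ℝ) / n - m₁) ^ 2 else v₀ - (-m₀) ^ 2)| ≤
      1 + |m₁| := by
  have hn' : (1 : ℝ) ≤ n := Nat.one_le_cast.2 (Nat.pos_of_ne_zero hn)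
  have x_le : (e / n : ℝ) ≤ 1 := div_le_one_of_le₀ (Nat.cast_le.2 he) (by positivity)
  have x_nonneg : (0 : ℝ) ≤ e / n := by positivity
  have sum_eq : ∑ u ∈ range n, (if u < e then v₁ - ((u : ℝ) / n - m₁) ^ 2 else v₀ - (-m₀) ^ 2) =
      (e / n) ^ 2 / 2 - e / n / (6 * n) - e / n * m₁ := by
    rw [sum_range_ite_lt he fun u => v₁ - ((u : ℝ) / n - m₁) ^ 2, sum_sub_distrib,
      sum_range_div_sub_sq hn, eq_sub_iff_add_eq.2 transport.symm, sum_const, card_range,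
      nsmul_eq_mul, nsmul_eq_mul, Nat.cast_sub he]
    field_simp
    ring
  have x_mul_le : |e / n * m₁| ≤ |m₁| := by
    rw [abs_mul, abs_of_nonneg x_nonneg]
    exact mul_le_of_le_one_left (abs_nonneg m₁) x_le
  rw [sum_eq]
  refine (abs_sub _ _).trans (add_le_add (abs_le.2 ⟨?_, ?_⟩) x_mul_le)
  · have : (e / n / (6 * n) : ℝ) ≤ 1 := div_le_one_of_le₀ (by linarith) (by positivity)
    nlinarith
  · have : (0 : ℝ) ≤ e / n / (6 * n) := by positivity
    nlinarith

lemma norm_average_sub_le {n : ℕ} {G : ℕ → ℂ} {α γ : ℕ → ℝ} {Ψ : ℂ} {t h C K : ℝ}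
    (h0 : 0 < h) (h_sq : h ^ 2 = (n : ℝ)⁻¹) (hΨ : ‖Ψ‖ ≤ 1)
    (hG : ∀ u, ‖G u - (1 + h * (t * α u * Complex.I) + h ^ 2 * (t ^ 2 / 2 * γ u)) * Ψ‖ ≤ C * h ^ 3)
    (hα : |∑ u ∈ range n, α u| ≤ K) (hγ : |∑ u ∈ range n, γ u| ≤ K) :
    ‖(∑ u ∈ range n, G u) / n - Ψ‖ ≤ (C + (|t| + t ^ 2 / 2) * K) * h ^ 3 := by
  have h1 : h ≤ 1 := (sq_le_one_iff₀ h0.le).1 (h_sq.trans_le (Nat.cast_inv_le_one n))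
  have hn : (n : ℝ) ≠ 0 := inv_pos.1 (h_sq ▸ pow_pos h0 2) |>.ne'
  have hn' : (n : ℂ) ≠ 0 := Nat.cast_ne_zero.2 (Nat.cast_ne_zero.1 hn)
  set R : ℂ := h * (t * (∑ u ∈ range n, α u : ℝ) * Complex.I)
    + h ^ 2 * (t ^ 2 / 2 * (∑ u ∈ range n, γ u : ℝ))
  have hK : 0 ≤ K := (abs_nonneg _).trans hα
  have norm_R : ‖R‖ ≤ (|t| + t ^ 2 / 2) * K * h := by
    refine (norm_add_le _ _).trans ?_
    simp only [norm_mul, norm_div, norm_pow, Complex.norm_real, Complex.norm_I, RCLike.norm_ofNat,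
      Real.norm_eq_abs, sq_abs, mul_one, abs_of_pos h0]
    calc h * (|t| * |∑ u ∈ range n, α u|) + h ^ 2 * (t ^ 2 / 2 * |∑ u ∈ range n, γ u|)
        ≤ h * (|t| * K) + h * (t ^ 2 / 2 * K) := by
          gcongr
          exact pow_le_of_le_one h0.le h1 two_ne_zero
      _ = (|t| + t ^ 2 / 2) * K * h := by ring
  calc ‖(∑ u ∈ range n, G u) / n - Ψ‖
      = ‖(∑ u ∈ range n, (G u - (1 + h * (t * α u * Complex.I) + h ^ 2 * (t ^ 2 / 2 * γ u)) * Ψ))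
          / n + R * Ψ / n‖ := by
        congr 1
        simp only [R, sum_sub_distrib, ← sum_mul, sum_add_distrib, ← mul_sum, sum_const, card_range,
          nsmul_eq_mul, Complex.ofReal_sum]
        field_simp
        ring
    _ ≤ n * (C * h ^ 3) / n + (|t| + t ^ 2 / 2) * K * h * 1 / n := by
        refine (norm_add_le _ _).trans ?_
        rw [norm_div, norm_div, norm_mul, RCLike.norm_natCast]
        gcongr
        exact (norm_sum_le_of_le _ fun u _ => hG u).trans_eq (by simp)
    _ = (C + (|t| + t ^ 2 / 2) * K) * h ^ 3 := by
        rw [mul_div_cancel_left₀ _ hn, div_eq_mul_inv, ← h_sq]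
        ring

/-- The rescaled coordinates of the state with `e` unselected cards and `k` shuffles still to be
read. -/
noncomputable def gridPoint (n k e : ℕ) : ℝ × ℝ := (e / n, k / n)

/-- The Gaussian approximation of the generating function of the inversions made by `k` shuffles
read backwards from a state with `e` unselected cards, at `exp (i t / n ^ (3 / 2))`. -/
noncomputable def inversionsAnsatz (n : ℕ) (t : ℝ) (k e : ℕ) : ℂ :=
  gaussianAnsatz meanProfile varProfile t (√n)⁻¹ (gridPoint n k e)

section Consistency

variable {n k e : ℕ} {c : ℝ}

lemma inversionsAnsatz_zero (n : ℕ) (t : ℝ) : inversionsAnsatz n t 0 = fun _ => 1 := by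
  funext e
  have mean_zero : meanProfile (gridPoint n 0 e) = 0 := by simp [meanProfile, gridPoint]
  have var_zero : varProfile (gridPoint n 0 e) = 0 := by
    simp only [varProfile, gridPoint, Nat.cast_zero, zero_div, mul_zero, Real.exp_zero]
    ring
  simp only [inversionsAnsatz, gaussianAnsatz, mean_zero, var_zero, Complex.ofReal_zero, mul_zero,
    zero_mul, sub_zero, Complex.exp_zero]

lemma inv_sqrt_natCast_le_one (hn : n ≠ 0) : (√n)⁻¹ ≤ 1 :=
  inv_le_one_of_one_le₀ (Real.one_le_sqrt.2 (Nat.one_le_cast.2 (Nat.pos_of_ne_zero hn)))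

lemma inv_sqrt_natCast_sq (n : ℕ) : (√n)⁻¹ ^ 2 = (n : ℝ)⁻¹ := by
  rw [inv_pow, Real.sq_sqrt n.cast_nonneg]

lemma gridPoint_mem_Icc (he : e ≤ n) (hk : (k / n : ℝ) ≤ c) :
    gridPoint n k e ∈ Set.Icc (0, 0) (1, c) :=
  ⟨⟨by unfold gridPoint; positivity, by unfold gridPoint; positivity⟩,
    ⟨div_le_one_of_le₀ (Nat.cast_le.2 he) n.cast_nonneg, hk⟩⟩

lemma norm_inversionsAnsatz_le_one (he : e ≤ n) (t : ℝ) : ‖inversionsAnsatz n t k e‖ ≤ 1 :=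
  have mem := gridPoint_mem_Icc he (le_refl (k / n : ℝ))
  norm_gaussianAnsatz_le_one (varProfile_nonneg ⟨mem.1.1, mem.2.1⟩ mem.1.2) t _

lemma gridPoint_succ_sub_smul {d : ℕ} (hd : d ≤ e) :
    gridPoint n (k + 1) e - (√n)⁻¹ ^ 2 • ((d : ℝ), (1 : ℝ)) = gridPoint n k (e - d) := by
  rw [inv_sqrt_natCast_sq, gridPoint, gridPoint, Nat.cast_sub hd]
  ext
  · simp only [Prod.smul_mk, Prod.mk_sub_mk, smul_eq_mul]
    ring
  · simp only [Prod.smul_mk, Prod.mk_sub_mk, smul_eq_mul]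
    push_cast
    ring

lemma exists_norm_inversionsAnsatz_increment_sub_le (c t : ℝ) :
    ∃ C, ∀ n ≠ 0, ∀ k e : ℕ, e ≤ n → ((k + 1 : ℕ) / n : ℝ) ≤ c →
      ∀ (d : ℕ) (y : ℝ), d ≤ 1 → d ≤ e → |y| ≤ 1 →
      ‖Complex.exp (t * ((√n)⁻¹ * y) * Complex.I) * inversionsAnsatz n t k (e - d)
        - (1 + (√n)⁻¹ * (t * (y - fderiv ℝ meanProfile (gridPoint n (k + 1) e) (d, 1)) * Complex.I)
          + (√n)⁻¹ ^ 2 * (t ^ 2 / 2 * (fderiv ℝ varProfile (gridPoint n (k + 1) e) (d, 1)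
            - (y - fderiv ℝ meanProfile (gridPoint n (k + 1) e) (d, 1)) ^ 2)))
          * inversionsAnsatz n t (k + 1) e‖ ≤ C * (√n)⁻¹ ^ 3 := by
  obtain ⟨C, hC⟩ := exists_norm_gaussianAnsatz_increment_sub_le contDiff_meanProfile
    contDiff_varProfile (isCompact_Icc (a := ((0 : ℝ), (0 : ℝ))) (b := (1, c))) (convex_Icc _ _) t
  refine ⟨|C|, fun n hn k e he hk d y hd hde hy => ?_⟩
  have norm_step : ‖((d : ℝ), (1 : ℝ))‖ ≤ 1 := by
    simpa [Prod.norm_def] using hd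
  have next_mem : gridPoint n k (e - d) ∈ Set.Icc (0, 0) (1, c) :=
    gridPoint_mem_Icc ((e.sub_le d).trans he) (le_trans (by gcongr; exact k.le_succ) hk)
  have relative := hC (√n)⁻¹ y (gridPoint n (k + 1) e) ((d : ℝ), (1 : ℝ)) (by positivity)
    (inv_sqrt_natCast_le_one hn) hy norm_step (gridPoint_mem_Icc he hk)
    (by rwa [gridPoint_succ_sub_smul hde])
  rw [gridPoint_succ_sub_smul hde] at relative
  refine relative.trans ?_
  calc C * (√n)⁻¹ ^ 3 * ‖inversionsAnsatz n t (k + 1) e‖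
      ≤ |C| * (√n)⁻¹ ^ 3 * 1 := by
        gcongr
        · exact le_abs_self C
        · exact norm_inversionsAnsatz_le_one he t
    _ = |C| * (√n)⁻¹ ^ 3 := mul_one _

lemma exists_norm_shuffleStep_inversionsAnsatz_sub_le (c t : ℝ) :
    ∃ C, ∀ n ≠ 0, ∀ k e : ℕ, e ≤ n → ((k + 1 : ℕ) / n : ℝ) ≤ c →
      ‖shuffleStep n (Complex.exp (t * (√n)⁻¹ ^ 3 * Complex.I)) (inversionsAnsatz n t k) e
        - inversionsAnsatz n t (k + 1) e‖ ≤ C * (√n)⁻¹ ^ 3 := by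
  obtain ⟨C, hC⟩ := exists_norm_inversionsAnsatz_increment_sub_le c t
  obtain ⟨K, bound_m, K_nonneg⟩ := ((eventually_norm_fderiv_apply_le
    (contDiff_meanProfile.of_le one_le_two) (isCompact_Icc (a := ((0 : ℝ), (0 : ℝ)))
      (b := (1, c)))).and (eventually_ge_atTop 0)).exists
  refine ⟨C + (|t| + t ^ 2 / 2) * (1 + K), fun n hn k e he hk => ?_⟩
  have bound_m₁ := bound_m _ (gridPoint_mem_Icc he hk) (1, 1) (by simp [Prod.norm_def])
  refine norm_average_sub_le (by positivity) (inv_sqrt_natCast_sq n)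
    (norm_inversionsAnsatz_le_one he t) (fun u => ?_)
    ((abs_sum_mean_le hn he (meanProfile_transport _ ((k + 1 : ℕ) / n))).trans
      (le_add_of_nonneg_right K_nonneg))
    ((abs_sum_variance_le hn he (varProfile_transport _ ((k + 1 : ℕ) / n))).trans
      (add_le_add_right bound_m₁ 1))
  split_ifs with hu
  · have hy : |(u / n : ℝ)| ≤ 1 := by
      rw [abs_of_nonneg (by positivity)]
      exact div_le_one_of_le₀ (Nat.cast_le.2 (hu.le.trans he)) n.cast_nonneg
    have z_pow : Complex.exp (t * (√n)⁻¹ ^ 3 * Complex.I) ^ u =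
        Complex.exp (t * ((√n)⁻¹ * (u / n : ℝ)) * Complex.I) := by
      rw [← Complex.exp_nat_mul, div_eq_mul_inv, ← inv_sqrt_natCast_sq]
      congr 1
      push_cast
      ring
    rw [z_pow]
    simpa [gridPoint] using hC n hn k e he hk 1 (u / n) le_rfl (Nat.one_le_of_lt hu) hy
  · simpa [gridPoint] using hC n hn k e he hk 0 0 zero_le_one e.zero_le (by simp)

end Consistency

section Limit

variable {c : ℝ}

lemma tendsto_inv_sqrt_natCast : Tendsto (fun n : ℕ => (√n)⁻¹) atTop (𝓝 0) :=
  (Real.tendsto_sqrt_atTop.comp tendsto_natCast_atTop_atTop).inv_tendsto_atTop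

lemma tendsto_iterate_shuffleStep_sub_inversionsAnsatz (hc : 0 ≤ c) (t : ℝ) :
    Tendsto (fun n : ℕ =>
      (shuffleStep n (Complex.exp (t * (√n)⁻¹ ^ 3 * Complex.I)))^[⌊c * n⌋₊] (fun _ => 1) n
        - inversionsAnsatz n t ⌊c * n⌋₊ n) atTop (𝓝 0) := by
  obtain ⟨C, hC⟩ := exists_norm_shuffleStep_inversionsAnsatz_sub_le c t
  have error_tendsto : Tendsto (fun n : ℕ => c * |C| * (√n)⁻¹) atTop (𝓝 0) := by
    simpa using tendsto_inv_sqrt_natCast.const_mul (c * |C|)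
  refine squeeze_zero_norm' ?_ error_tendsto
  filter_upwards [eventually_ne_atTop 0] with n hn
  have hn' : (0 : ℝ) < n := Nat.cast_pos.2 (Nat.pos_of_ne_zero hn)
  have floor_le : (⌊c * n⌋₊ : ℝ) ≤ c * n := Nat.floor_le (by positivity)
  have one_step : ∀ k < ⌊c * n⌋₊, ∀ e ≤ n,
      ‖shuffleStep n (Complex.exp (t * (√n)⁻¹ ^ 3 * Complex.I)) (inversionsAnsatz n t k) e
        - inversionsAnsatz n t (k + 1) e‖ ≤ C * (√n)⁻¹ ^ 3 := by
    refine fun k hk e he => hC n hn k e he ((div_le_iff₀ hn').2 (le_trans ?_ floor_le))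
    exact_mod_cast Nat.succ_le_of_lt hk
  have norm_z : ‖Complex.exp (t * (√n)⁻¹ ^ 3 * Complex.I)‖ ≤ 1 := by
    rw [← Complex.ofReal_pow, ← Complex.ofReal_mul, Complex.norm_exp_ofReal_mul_I]
  rw [← inversionsAnsatz_zero n t]
  calc _ ≤ ⌊c * n⌋₊ * (C * (√n)⁻¹ ^ 3) :=
        norm_iterate_shuffleStep_sub_le norm_z one_step n le_rfl
    _ ≤ ⌊c * n⌋₊ * (|C| * (√n)⁻¹ ^ 3) := by
        gcongr
        exact le_abs_self C
    _ ≤ c * n * (|C| * (√n)⁻¹ ^ 3) := by gcongr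
    _ = c * |C| * (n * (√n)⁻¹ ^ 2) * (√n)⁻¹ := by ring
    _ = c * |C| * (√n)⁻¹ := by rw [inv_sqrt_natCast_sq, mul_inv_cancel₀ hn'.ne', mul_one]

lemma tendsto_sqrt_mul_comp_floor_sub {f : ℝ → ℝ} (hf : DifferentiableAt ℝ f c) (hc : 0 ≤ c) :
    Tendsto (fun n : ℕ => √n * (f (⌊c * n⌋₊ / n) - f c)) atTop (𝓝 0) := by
  have floor_tendsto : Tendsto (fun n : ℕ => (⌊c * n⌋₊ / n : ℝ)) atTop (𝓝 c) :=
    (tendsto_nat_floor_mul_div_atTop hc).comp tendsto_natCast_atTop_atTop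
  have floor_sub : (fun n : ℕ => (⌊c * n⌋₊ / n - c : ℝ)) =O[atTop] fun n : ℕ => (n : ℝ)⁻¹ := by
    refine Asymptotics.IsBigO.of_bound 1 ?_
    filter_upwards [eventually_ne_atTop 0] with n hn
    have hn' : (0 : ℝ) < n := Nat.cast_pos.2 (Nat.pos_of_ne_zero hn)
    have floor_le : (⌊c * n⌋₊ : ℝ) ≤ c * n := Nat.floor_le (by positivity)
    have lt_floor : c * n < ⌊c * n⌋₊ + 1 := Nat.lt_floor_add_one _
    rw [div_sub' hn'.ne', norm_div, norm_inv, one_mul, div_eq_mul_inv]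
    refine mul_le_of_le_one_left (by positivity) (abs_le.2 ⟨?_, ?_⟩) <;> linarith
  have bound := (Asymptotics.isBigO_refl (fun n : ℕ => √n) atTop).mul
    ((hf.isBigO_sub.comp_tendsto floor_tendsto).trans floor_sub)
  refine bound.trans_tendsto (tendsto_inv_sqrt_natCast.congr fun n => ?_)
  rw [← div_eq_mul_inv, Real.sqrt_div_self', one_div]

lemma tendsto_cexp_mul_inversionsAnsatz (hc : 0 ≤ c) (t : ℝ) :
    Tendsto (fun n : ℕ => Complex.exp (-(t * (√n * meanProfile (1, c)) * Complex.I))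
        * inversionsAnsatz n t ⌊c * n⌋₊ n) atTop
      (𝓝 (Complex.exp (-(t ^ 2 / 2 * varProfile (1, c))))) := by
  have mean_tendsto := tendsto_sqrt_mul_comp_floor_sub (c := c)
    (f := fun s => meanProfile (1, s))
    ((contDiff_meanProfile.differentiable two_ne_zero).comp (by fun_prop) c) hc
  have var_tendsto : Tendsto (fun n : ℕ => varProfile (1, ⌊c * n⌋₊ / n)) atTop
      (𝓝 (varProfile (1, c))) :=
    (contDiff_varProfile.continuous.tendsto _).comp (tendsto_const_nhds.prodMk_nhds
      ((tendsto_nat_floor_mul_div_atTop hc).comp tendsto_natCast_atTop_atTop))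
  have exponent_tendsto := ((mean_tendsto.ofReal.const_mul (t : ℂ)).mul_const Complex.I).sub
    (var_tendsto.ofReal.const_mul ((t : ℂ) ^ 2 / 2))
  rw [Complex.ofReal_zero, mul_zero, zero_mul, zero_sub] at exponent_tendsto
  refine (exponent_tendsto.cexp).congr' ?_
  filter_upwards [eventually_ne_atTop 0] with n hn
  rw [inversionsAnsatz, gridPoint, div_self (Nat.cast_ne_zero.2 hn), gaussianAnsatz,
    ← Complex.exp_add, inv_inv]
  congr 1
  push_cast
  ring

end Limit

section UniformLaw

variable {α : Type*} [Fintype α]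

/-- The law of `X` under the uniform distribution on the finite type `α`. -/
noncomputable def uniformLaw (X : α → ℝ) : Measure ℝ :=
  (Fintype.card α : ENNReal)⁻¹ • ∑ a, Measure.dirac (X a)

instance isProbabilityMeasure_uniformLaw [Nonempty α] (X : α → ℝ) :
    IsProbabilityMeasure (uniformLaw X) where
  measure_univ := by simp [uniformLaw, ENNReal.inv_mul_cancel, Fintype.card_ne_zero]

lemma integral_uniformLaw {E : Type*} [NormedAddCommGroup E] [NormedSpace ℝ E] [CompleteSpace E]
    (X : α → ℝ) (g : ℝ → E) :
    ∫ x, g x ∂uniformLaw X = (Fintype.card α : ℝ)⁻¹ • ∑ a, g (X a) := by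
  rw [uniformLaw, integral_smul_measure,
    integral_finsetSum_measure fun a _ => integrable_dirac (by simp)]
  simp

lemma charFun_uniformLaw (X : α → ℝ) (t : ℝ) :
    charFun (uniformLaw X) t = (∑ a, Complex.exp (t * X a * Complex.I)) / Fintype.card α := by
  rw [charFun_apply_real, integral_uniformLaw, Complex.real_smul, Complex.ofReal_inv,
    Complex.ofReal_natCast, div_eq_inv_mul]

lemma tendsto_unifExpect_of_tendsto_charFun {Ω : ℕ → Type*} [∀ n, Fintype (Ω n)]
    [∀ n, Nonempty (Ω n)] {X : ∀ n, Ω n → ℝ} {ν : Measure ℝ} [IsProbabilityMeasure ν]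
    (h : ∀ t, Tendsto (fun n => charFun (uniformLaw (X n)) t) atTop (𝓝 (charFun ν t)))
    (g : BoundedContinuousFunction ℝ ℝ) :
    Tendsto (fun n => unifExpect fun ω => g (X n ω)) atTop (𝓝 (∫ x, g x ∂ν)) := by
  have weak_limit :=
    ProbabilityMeasure.tendsto_of_tendsto_charFun (μ := fun n => ⟨uniformLaw (X n), inferInstance⟩)
      (μ₀ := ⟨ν, inferInstance⟩) h
  refine (ProbabilityMeasure.tendsto_iff_forall_integral_tendsto.1 weak_limit g).congr fun n => ?_
  rw [ProbabilityMeasure.coe_mk, integral_uniformLaw, unifExpect, smul_eq_mul, div_eq_inv_mul]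

end UniformLaw

lemma charFun_uniformLaw_inversionCount {n : ℕ} (hn : n ≠ 0) (r : ℕ) (μ t : ℝ) :
    charFun (uniformLaw fun s : Fin r → Fin n =>
        ((inversionCount (rttPerm n r s) : ℝ) - n ^ 2 * μ) / (n : ℝ) ^ ((3 : ℝ) / 2)) t =
      Complex.exp (-(t * (√n * μ) * Complex.I)) *
        (shuffleStep n (Complex.exp (t * (√n)⁻¹ ^ 3 * Complex.I)))^[r] (fun _ => 1) n := by
  have hn' : (n : ℂ) ≠ 0 := Nat.cast_ne_zero.2 hn
  have sqrt_ne_zero : √n ≠ 0 := Real.sqrt_ne_zero'.2 (Nat.cast_pos.2 (Nat.pos_of_ne_zero hn))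
  have rpow_eq : (n : ℝ) ^ ((3 : ℝ) / 2) = √n ^ 3 := by
    rw [Real.sqrt_eq_rpow, ← Real.rpow_natCast, ← Real.rpow_mul n.cast_nonneg]
    norm_num
  have standardize (i : ℕ) : (i - n ^ 2 * μ) / √n ^ 3 = i * (√n)⁻¹ ^ 3 - √n * μ := by
    rw [div_eq_iff (pow_ne_zero 3 sqrt_ne_zero), sub_mul, mul_assoc, ← mul_pow,
      inv_mul_cancel₀ sqrt_ne_zero]
    nth_rw 1 [← Real.sq_sqrt n.cast_nonneg]
    ring
  have term_eq (i : ℕ) : Complex.exp (t * (i * (√n)⁻¹ ^ 3 - √n * μ : ℝ) * Complex.I) =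
      Complex.exp (-(t * (√n * μ) * Complex.I)) *
        Complex.exp (t * (√n)⁻¹ ^ 3 * Complex.I) ^ i := by
    rw [← Complex.exp_nat_mul, ← Complex.exp_add]
    push_cast
    ring_nf
  simp only [charFun_uniformLaw, rpow_eq, standardize, term_eq, ← mul_sum, sum_pow_inversionCount,
    Fintype.card_fun, Fintype.card_fin, Nat.cast_pow]
  rw [mul_div_assoc, mul_div_cancel_left₀ _ (pow_ne_zero r hn')]

lemma tendsto_charFun_uniformLaw_inversionCount {c : ℝ} (hc : 0 ≤ c) (t : ℝ) :
    Tendsto (fun n : ℕ => charFun (uniformLaw fun s : Fin ⌊c * n⌋₊ → Fin n =>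
        ((inversionCount (rttPerm n ⌊c * n⌋₊ s) : ℝ) - n ^ 2 * meanProfile (1, c))
          / (n : ℝ) ^ ((3 : ℝ) / 2)) t) atTop
      (𝓝 (charFun (gaussianReal 0 (varProfile (1, c)).toNNReal) t)) := by
  have error_tendsto : Tendsto (fun n : ℕ =>
      Complex.exp (-(t * (√n * meanProfile (1, c)) * Complex.I)) *
        ((shuffleStep n (Complex.exp (t * (√n)⁻¹ ^ 3 * Complex.I)))^[⌊c * n⌋₊] (fun _ => 1) n
          - inversionsAnsatz n t ⌊c * n⌋₊ n)) atTop (𝓝 0) := by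
    refine squeeze_zero_norm (fun n => ?_)
      (tendsto_zero_iff_norm_tendsto_zero.1
        (tendsto_iterate_shuffleStep_sub_inversionsAnsatz hc t))
    have norm_phase : ‖Complex.exp (-(t * (√n * meanProfile (1, c)) * Complex.I))‖ = 1 := by
      simpa using Complex.norm_exp_ofReal_mul_I (-(t * (√n * meanProfile (1, c))))
    rw [norm_mul, norm_phase, one_mul]
  have gaussian_eq : charFun (gaussianReal 0 (varProfile (1, c)).toNNReal) t =
      0 + Complex.exp (-(t ^ 2 / 2 * varProfile (1, c))) := by
    rw [charFun_gaussianReal, Real.coe_toNNReal _ (varProfile_nonneg (by simp) hc), zero_add]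
    congr 1
    push_cast
    ring
  rw [gaussian_eq]
  refine (error_tendsto.add (tendsto_cexp_mul_inversionsAnsatz hc t)).congr' ?_
  filter_upwards [eventually_ne_atTop 0] with n hn
  rw [charFun_uniformLaw_inversionCount hn]
  ring

/-- **Theorem (inversions, critical regime).** For `c > 0` and `r = ⌊cn⌋` iterated
random-to-top shuffles of an `n`-card deck started at the identity,
`(I - n²(1 - e⁻²ᶜ)/4)/n^{3/2}` converges in distribution (tested against every bounded
continuous function) to `N(0, (1 + 8e⁻³ᶜ - 9(1+c)e⁻⁴ᶜ)/36)`. -/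
theorem rtt_inversions_critical (c : ℝ) (hc : 0 < c) :
    ∀ g : BoundedContinuousFunction ℝ ℝ,
      Tendsto
        (fun n : ℕ =>
          unifExpect (fun s : Fin ⌊c * (n : ℝ)⌋₊ → Fin n =>
            g (((inversionCount (rttPerm n ⌊c * (n : ℝ)⌋₊ s) : ℝ) -
                  (n : ℝ) ^ 2 * (1 - Real.exp (-2 * c)) / 4) / (n : ℝ) ^ ((3 : ℝ) / 2))))
        atTop
        (𝓝 (∫ x, g x ∂(gaussianReal 0
          (Real.toNNReal
            ((1 + 8 * Real.exp (-3 * c) - 9 * (1 + c) * Real.exp (-4 * c)) / 36))))) := by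
  intro g
  have mean_eq : meanProfile (1, c) = (1 - Real.exp (-2 * c)) / 4 := by simp [meanProfile]
  have var_eq : varProfile (1, c) =
      (1 + 8 * Real.exp (-3 * c) - 9 * (1 + c) * Real.exp (-4 * c)) / 36 := by
    rw [varProfile]
    ring
  have (n : ℕ) : Nonempty (Fin ⌊c * n⌋₊ → Fin n) := by
    cases n with
    | zero => rw [Nat.cast_zero, mul_zero, Nat.floor_zero]; infer_instance
    | succ n => infer_instance
  have limit := tendsto_unifExpect_of_tendsto_charFun
    (tendsto_charFun_uniformLaw_inversionCount hc.le) g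
  simpa only [mean_eq, var_eq, ← mul_div_assoc] using limit
end

section
/- Let (r_n) be a sequence of positive integers such that r_n ≥ (n log n)/4 + c_n n for some sequence c_n → ∞. For each n, let I^{r_n}_n be the number of inversions of the random permutation of [n] obtained by performing r_n iterated random-to-top shuffles starting from the identity. Then (I^{r_n}_n − n²/4) / n^{3/2} converges in distribution, as n → ∞, to a centered normal random variable with variance 1/36. -/
open MeasureTheory ProbabilityTheory Filter Finset Topology
open scoped NNReal

/-!
Shuffle a uniformly random deck with the same moves as the identity deck. The former stays uniform,
and the two decks agree on the relative order of any two cards of which at least one has been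
selected, so their inversion numbers differ by at most the square of the number of cards that were
never selected. That square has mean at most `n e^{-r/n} + n² e^{-2r/n}`, which is `o(n^{3/2})` once
`r ≥ n log n / 4 + c n` with `c → ∞`, so it remains to treat a uniform permutation.

There the inversion number is a sum of independent variables, uniform on `{0, …, j}` for `j < n`.
Each has a ratio of two values of `sinc` as characteristic function, up to a phase, and
`sinc x = exp (-x² / 6) + O(x⁴)` turns the product into a Gaussian. Lévy's continuity theorem
concludes.
-/

open scoped BigOperators

/-- The deck obtained from the deck `π` by moving the cards in the list `l` to the top, one after
the other. -/
def shuffle {n : ℕ} (l : List (Fin n)) (π : Equiv.Perm (Fin n)) : Equiv.Perm (Fin n) :=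
  l.foldl (fun π c => moveToTop c π) π

/-- Card `a` lies above card `b` in the deck `π`, that is, in an earlier position. A move acts
transparently on this relation, and inversions are counted through it. -/
def IsAbove {n : ℕ} (π : Equiv.Perm (Fin n)) (a b : Fin n) : Prop :=
  π⁻¹ a < π⁻¹ b

instance {n : ℕ} (π : Equiv.Perm (Fin n)) (a b : Fin n) : Decidable (IsAbove π a b) :=
  inferInstanceAs (Decidable (π⁻¹ a < π⁻¹ b))

section Shuffle

variable {n : ℕ} {a b : Fin n}

@[simp]
lemma shuffle_cons (c : Fin n) (l : List (Fin n)) (π : Equiv.Perm (Fin n)) :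
    shuffle (c :: l) π = shuffle l (moveToTop c π) := rfl

lemma moveToTop_mul (ρ π : Equiv.Perm (Fin n)) (c : Fin n) :
    moveToTop (ρ c) (ρ * π) = ρ * moveToTop c π := by
  simp [moveToTop, mul_assoc]

lemma shuffle_map_mul (ρ : Equiv.Perm (Fin n)) (l : List (Fin n)) (π : Equiv.Perm (Fin n)) :
    shuffle (l.map ρ) (ρ * π) = ρ * shuffle l π := by
  induction l generalizing π with
  | nil => rfl
  | cons c l ih => simp [moveToTop_mul, ih]

lemma cycleRange_lt_cycleRange_iff_s5 {p x y : Fin n} (hxy : x ≠ y) :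
    p.cycleRange x < p.cycleRange y ↔ x = p ∨ y ≠ p ∧ x < y := by
  obtain _ | n := n
  · exact p.elim0
  obtain rfl | hx := eq_or_ne x p
  · obtain ⟨y, rfl⟩ := Fin.exists_succAbove_eq hxy.symm
    simp
  obtain ⟨x, rfl⟩ := Fin.exists_succAbove_eq hx
  obtain rfl | hy := eq_or_ne y p
  · simp [hx]
  obtain ⟨y, rfl⟩ := Fin.exists_succAbove_eq hy
  simp [hx, hy]

lemma isAbove_moveToTop_iff (hab : a ≠ b) (c : Fin n) (π : Equiv.Perm (Fin n)) :
    IsAbove (moveToTop c π) a b ↔ a = c ∨ b ≠ c ∧ IsAbove π a b := by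
  have hpos : π⁻¹ a ≠ π⁻¹ b := π⁻¹.injective.ne hab
  have hmove (x : Fin n) : (moveToTop c π)⁻¹ x = (π⁻¹ c).cycleRange (π⁻¹ x) := by simp [moveToTop]
  simp only [IsAbove, hmove, cycleRange_lt_cycleRange_iff_s5 hpos, π⁻¹.injective.eq_iff, ne_eq]

lemma isAbove_shuffle_congr (hab : a ≠ b) {π π' : Equiv.Perm (Fin n)} :
    ∀ l : List (Fin n), (IsAbove π a b ↔ IsAbove π' a b) →
      (IsAbove (shuffle l π) a b ↔ IsAbove (shuffle l π') a b)
  | [], h => h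
  | c :: l, h => isAbove_shuffle_congr hab l (by simp only [isAbove_moveToTop_iff hab, h])

/-- The relative order of two cards depends only on the last move of one of them. -/
lemma isAbove_shuffle_iff_of_mem (hab : a ≠ b) {l : List (Fin n)} (hl : a ∈ l ∨ b ∈ l)
    (π π' : Equiv.Perm (Fin n)) :
    IsAbove (shuffle l π) a b ↔ IsAbove (shuffle l π') a b := by
  induction l generalizing π π' with
  | nil => simp at hl
  | cons c l ih =>
    by_cases hmem : a ∈ l ∨ b ∈ l
    · exact ih hmem _ _
    · have hc : a = c ∨ b = c := by grind
      refine isAbove_shuffle_congr hab l ?_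
      rcases hc with rfl | rfl <;> simp [isAbove_moveToTop_iff hab, hab]

lemma inversionCount_eq_card_isAbove (π : Equiv.Perm (Fin n)) :
    inversionCount π = #{p : Fin n × Fin n | p.1 < p.2 ∧ IsAbove π p.2 p.1} := by
  refine card_equiv ((Equiv.prodComm _ _).trans (π.prodCongr π)) fun p => ?_
  simp only [mem_filter_univ]
  simp [IsAbove, and_comm]

lemma inversionCount_shuffle_le (l : List (Fin n)) (π π' : Equiv.Perm (Fin n)) :
    inversionCount (shuffle l π) ≤ inversionCount (shuffle l π') + #l.toFinsetᶜ ^ 2 := by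
  classical
  rw [inversionCount_eq_card_isAbove, inversionCount_eq_card_isAbove, sq, ← card_product]
  refine (card_le_card fun p hp => ?_).trans (card_union_le _ _)
  simp only [mem_filter, mem_univ, true_and, mem_union, mem_product, mem_compl,
    List.mem_toFinset] at hp ⊢
  by_cases hl : p.2 ∈ l ∨ p.1 ∈ l
  · exact .inl ⟨hp.1, (isAbove_shuffle_iff_of_mem hp.1.ne' hl π π').1 hp.2⟩
  · exact .inr (by tauto)

lemma abs_inversionCount_shuffle_sub_le (l : List (Fin n)) (π π' : Equiv.Perm (Fin n)) :
    |(inversionCount (shuffle l π) : ℝ) - inversionCount (shuffle l π')| ≤ #l.toFinsetᶜ ^ 2 := by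
  have h := inversionCount_shuffle_le l π π'
  have h' := inversionCount_shuffle_le l π' π
  rw [abs_sub_le_iff, sub_le_iff_le_add', sub_le_iff_le_add']
  exact ⟨mod_cast h, mod_cast h'⟩

/-- A uniformly random deck stays uniform under random-to-top moves: relabelling the cards by a
uniform `ρ` changes neither the law of the moves nor that of the starting deck. -/
lemma expect_shuffle {r : ℕ} {M : Type*} [AddCommMonoid M] [Module ℚ≥0 M]
    [Nonempty (Fin r → Fin n)] (F : Equiv.Perm (Fin n) → M) :
    𝔼 s : Fin r → Fin n, 𝔼 σ, F (shuffle (List.ofFn s) σ) = 𝔼 π, F π := by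
  have relabel (ρ : Equiv.Perm (Fin n)) :
      𝔼 s : Fin r → Fin n, 𝔼 σ, F (ρ * shuffle (List.ofFn s) σ) =
        𝔼 s : Fin r → Fin n, 𝔼 σ, F (shuffle (List.ofFn s) σ) := by
    refine Fintype.expect_equiv (Equiv.arrowCongr (Equiv.refl _) ρ) _ _ fun s => ?_
    refine Fintype.expect_equiv (Equiv.mulLeft ρ) _ _ fun σ => ?_
    rw [Equiv.coe_mulLeft, ← shuffle_map_mul, List.map_ofFn]
    rfl
  calc 𝔼 s : Fin r → Fin n, 𝔼 σ, F (shuffle (List.ofFn s) σ)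
      = 𝔼 ρ, 𝔼 s : Fin r → Fin n, 𝔼 σ, F (ρ * shuffle (List.ofFn s) σ) := by
        simp_rw [relabel, Fintype.expect_const]
    _ = 𝔼 s : Fin r → Fin n, 𝔼 σ, 𝔼 ρ, F (ρ * shuffle (List.ofFn s) σ) := by
        rw [expect_comm]
        exact expect_congr rfl fun s _ => expect_comm _ _ _
    _ = 𝔼 _s : Fin r → Fin n, 𝔼 _σ : Equiv.Perm (Fin n), 𝔼 ρ, F ρ := by
        simp_rw [fun τ => Fintype.expect_equiv (Equiv.mulRight τ) (fun ρ => F (ρ * τ)) F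
          fun _ => rfl]
    _ = 𝔼 π, F π := by simp_rw [Fintype.expect_const]

end Shuffle

section GeneratingFunction

variable {n : ℕ}

/-- The permutation of `Fin (n + 1)` with first value `p` whose remaining values are in the
relative order `σ`; this recursion makes the inversion count a sum of independent variables. -/
def consPerm (p : Fin (n + 1)) (σ : Equiv.Perm (Fin n)) : Equiv.Perm (Fin (n + 1)) :=
  ((finSuccEquiv n).trans σ.optionCongr).trans (finSuccEquiv' p).symm

@[simp]
lemma consPerm_zero (p : Fin (n + 1)) (σ : Equiv.Perm (Fin n)) : consPerm p σ 0 = p := by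
  simp [consPerm]

@[simp]
lemma consPerm_succ (p : Fin (n + 1)) (σ : Equiv.Perm (Fin n)) (i : Fin n) :
    consPerm p σ i.succ = p.succAbove (σ i) := by
  simp [consPerm]

lemma consPerm_bijective :
    Function.Bijective fun q : Fin (n + 1) × Equiv.Perm (Fin n) => consPerm q.1 q.2 := by
  refine (Fintype.bijective_iff_injective_and_card _).2 ⟨?_, by
    simp [Fintype.card_perm, Nat.factorial_succ]⟩
  rintro ⟨p, σ⟩ ⟨p', σ'⟩ h
  have hval (i : Fin (n + 1)) : consPerm p σ i = consPerm p' σ' i := DFunLike.congr_fun h i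
  obtain rfl : p = p' := by simpa using hval 0
  obtain rfl : σ = σ' := Equiv.ext fun i => by simpa using hval i.succ
  rfl

lemma inversionCount_eq_sum (π : Equiv.Perm (Fin n)) :
    inversionCount π = ∑ i, ∑ j, if i < j ∧ π j < π i then 1 else 0 := by
  rw [inversionCount, card_filter, Fintype.sum_prod_type]

lemma inversionCount_consPerm (p : Fin (n + 1)) (σ : Equiv.Perm (Fin n)) :
    inversionCount (consPerm p σ) = p + inversionCount σ := by
  have first_row : (∑ j : Fin n, if p.succAbove (σ j) < p then 1 else 0) = (p : ℕ) := by
    rw [Equiv.sum_comp σ fun j => if p.succAbove j < p then 1 else 0, ← card_filter]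
    simp_rw [Fin.succAbove_lt_iff_castSucc_lt, Fin.lt_def, Fin.val_castSucc]
    rw [Fin.card_filter_val_lt, min_eq_right p.is_le]
  simp [inversionCount_eq_sum, Fin.sum_univ_succ, first_row, -sum_boole]

lemma expect_pow_inversionCount {R : Type*} [CommSemiring R] [Algebra ℚ≥0 R] (z : R) (n : ℕ) :
    𝔼 π : Equiv.Perm (Fin n), z ^ inversionCount π =
      ∏ j ∈ range n, 𝔼 k : Fin (j + 1), z ^ (k : ℕ) := by
  induction n with
  | zero => simp [inversionCount]
  | succ n ih =>
    rw [← Fintype.expect_bijective _ consPerm_bijective _ _ fun _ => rfl, ← univ_product_univ,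
      expect_product, prod_range_succ, ← ih, mul_comm, Fintype.expect_mul_expect]
    simp_rw [inversionCount_consPerm, pow_add]

end GeneratingFunction

section CharacteristicFunction

open Complex
open Real (sinc)

lemma sum_exp_pow_mul_sin (x : ℂ) (m : ℕ) :
    (∑ k ∈ range (m + 1), exp (2 * x * I) ^ k) * sin x = exp (m * x * I) * sin ((m + 1) * x) := by
  set w := exp (x * I)
  have hw : w ≠ 0 := exp_ne_zero _
  have h2 : exp (2 * x * I) = w ^ 2 := by rw [← exp_nat_mul]; push_cast; ring_nf
  have hm : exp (m * x * I) = w ^ m := by rw [← exp_nat_mul, mul_assoc]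
  have hsin : sin x = (w⁻¹ - w) * I / 2 := by rw [sin, ← exp_neg, neg_mul]
  have hsin' : sin ((m + 1) * x) = ((w ^ (m + 1))⁻¹ - w ^ (m + 1)) * I / 2 := by
    rw [sin, ← exp_nat_mul, ← exp_neg]
    push_cast
    ring_nf
  have hgeom := geom_sum_mul (w ^ 2) (m + 1)
  rw [h2, hm, hsin, hsin']
  field_simp
  linear_combination (-(w * w ^ m)) * hgeom

lemma expect_exp_pow_mul_sinc (θ : ℝ) (m : ℕ) :
    (𝔼 k : Fin (m + 1), exp (θ * I) ^ (k : ℕ)) * sinc (θ / 2) =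
      exp ((m * θ / 2 : ℝ) * I) * sinc ((m + 1 : ℕ) * (θ / 2)) := by
  obtain rfl | hθ := eq_or_ne θ 0
  · simp
  have hsum := sum_exp_pow_mul_sin (θ / 2) m
  rw [Real.sinc_of_ne_zero (by positivity), Real.sinc_of_ne_zero (by positivity),
    Fintype.expect_eq_sum_div_card, Fin.sum_univ_eq_sum_range fun k => exp (θ * I) ^ k]
  have hm : (m + 1 : ℂ) ≠ 0 := mod_cast m.succ_ne_zero
  have hθ' : (θ : ℂ) ≠ 0 := mod_cast hθ
  push_cast [Fintype.card_fin]
  field_simp at hsum ⊢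
  exact hsum

lemma expect_exp_pow_inversionCount_mul_sinc (θ : ℝ) (n : ℕ) :
    (𝔼 π : Equiv.Perm (Fin n), exp (θ * I) ^ inversionCount π) * sinc (θ / 2) ^ n =
      exp ((n * (n - 1) * θ / 4 : ℝ) * I) *
        ∏ j ∈ range n, (sinc ((j + 1 : ℕ) * (θ / 2)) : ℂ) := by
  rw [expect_pow_inversionCount]
  induction n with
  | zero => simp
  | succ n ih =>
    have hphase : exp (((n + 1 : ℕ) * ((n + 1 : ℕ) - 1) * θ / 4 : ℝ) * I) =
        exp ((n * (n - 1) * θ / 4 : ℝ) * I) * exp ((n * θ / 2 : ℝ) * I) := by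
      rw [← exp_add]
      push_cast
      ring_nf
    rw [prod_range_succ, prod_range_succ, pow_succ, mul_mul_mul_comm, ih,
      expect_exp_pow_mul_sinc, hphase, mul_mul_mul_comm]

end CharacteristicFunction

section SincProducts

open Real (sinc exp)

lemma norm_prod_sub_prod_le_sum {ι R : Type*} [NormedCommRing R] [NormOneClass R]
    (s : Finset ι) {f g : ι → R} (hf : ∀ i ∈ s, ‖f i‖ ≤ 1) (hg : ∀ i ∈ s, ‖g i‖ ≤ 1) :
    ‖∏ i ∈ s, f i - ∏ i ∈ s, g i‖ ≤ ∑ i ∈ s, ‖f i - g i‖ := by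
  classical
  induction s using Finset.induction_on with
  | empty => simp
  | insert a s ha ih =>
    rw [forall_mem_insert] at hf hg
    have hprod : ‖∏ i ∈ s, f i‖ ≤ 1 :=
      (s.norm_prod_le f).trans (prod_le_one (fun _ _ => norm_nonneg _) hf.2)
    rw [prod_insert ha, prod_insert ha, sum_insert ha]
    calc ‖f a * ∏ i ∈ s, f i - g a * ∏ i ∈ s, g i‖
        = ‖(f a - g a) * ∏ i ∈ s, f i + g a * (∏ i ∈ s, f i - ∏ i ∈ s, g i)‖ := by ring_nf
      _ ≤ ‖f a - g a‖ * ‖∏ i ∈ s, f i‖ + ‖g a‖ * ‖∏ i ∈ s, f i - ∏ i ∈ s, g i‖ :=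
        (norm_add_le _ _).trans (add_le_add (norm_mul_le _ _) (norm_mul_le _ _))
      _ ≤ ‖f a - g a‖ * 1 + 1 * ∑ i ∈ s, ‖f i - g i‖ := by
        gcongr
        exacts [hg.1, ih hf.2 hg.2]
      _ = ‖f a - g a‖ + ∑ i ∈ s, ‖f i - g i‖ := by rw [mul_one, one_mul]

lemma abs_sinc_sub_exp_le {x : ℝ} (hx : |x| ≤ 1) : |sinc x - exp (-(x ^ 2 / 6))| ≤ x ^ 4 := by
  have hsinc : |sinc x - (1 - x ^ 2 / 6)| ≤ x ^ 4 / 100 := by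
    obtain rfl | h0 := eq_or_ne x 0
    · simp
    rw [Real.sinc_of_ne_zero h0, show Real.sin x / x - (1 - x ^ 2 / 6) =
      (Real.sin x - (x - x ^ 3 / 6)) / x by field_simp, abs_div, div_le_iff₀ (abs_pos.2 h0)]
    calc |Real.sin x - (x - x ^ 3 / 6)| ≤ _ := Real.sin_bound hx
      _ = x ^ 4 / 100 * |x| := by rw [← Even.pow_abs (by decide : Even 4)]; ring
  have hx2 : x ^ 2 ≤ 1 := (sq_le_one_iff_abs_le_one x).2 hx
  have hexp : |exp (-(x ^ 2 / 6)) - 1 - -(x ^ 2 / 6)| ≤ (-(x ^ 2 / 6)) ^ 2 :=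
    Real.abs_exp_sub_one_sub_id_le (by rw [abs_neg, abs_of_nonneg (by positivity)]; linarith)
  rw [abs_le] at *
  constructor <;> nlinarith [sq_nonneg (x ^ 2)]

/-- `sinc a = exp (-a² / 6) + O(a⁴)`, and the fourth powers are negligible since
`∑ a⁴ ≤ b² ∑ a²`. -/
lemma tendsto_prod_sinc {ι κ : Type*} {l : Filter ι} {s : ι → Finset κ} {a : ι → κ → ℝ}
    {b : ι → ℝ} {L : ℝ} (hb : Tendsto b l (𝓝 0)) (hab : ∀ᶠ i in l, ∀ j ∈ s i, |a i j| ≤ b i)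
    (hL : Tendsto (fun i => ∑ j ∈ s i, a i j ^ 2) l (𝓝 L)) :
    Tendsto (fun i => ∏ j ∈ s i, sinc (a i j)) l (𝓝 (exp (-(L / 6)))) := by
  have hexp : Tendsto (fun i => ∏ j ∈ s i, exp (-(a i j ^ 2 / 6))) l (𝓝 (exp (-(L / 6)))) := by
    simp_rw [← Real.exp_sum, sum_neg_distrib, ← sum_div]
    exact ((hL.div_const 6).neg).rexp
  have hbound : Tendsto (fun i => b i ^ 2 * ∑ j ∈ s i, a i j ^ 2) l (𝓝 0) := by
    simpa using (hb.pow 2).mul hL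
  refine hexp.congr_dist (squeeze_zero' (.of_forall fun _ => dist_nonneg) ?_ hbound)
  filter_upwards [hab, hb.eventually (eventually_le_nhds zero_lt_one)] with i hi hbi
  rw [dist_comm, dist_eq_norm]
  calc ‖∏ j ∈ s i, sinc (a i j) - ∏ j ∈ s i, exp (-(a i j ^ 2 / 6))‖
      ≤ ∑ j ∈ s i, ‖sinc (a i j) - exp (-(a i j ^ 2 / 6))‖ := by
        refine norm_prod_sub_prod_le_sum _ (fun j _ => Real.abs_sinc_le_one _) fun j _ => ?_
        rw [Real.norm_of_nonneg (Real.exp_pos _).le, Real.exp_le_one_iff, neg_nonpos]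
        positivity
    _ ≤ ∑ j ∈ s i, b i ^ 2 * a i j ^ 2 := by
        refine sum_le_sum fun j hj => (abs_sinc_sub_exp_le ((hi j hj).trans hbi)).trans ?_
        rw [show a i j ^ 4 = |a i j| ^ 2 * a i j ^ 2 by rw [sq_abs]; ring]
        gcongr
        exact hi j hj
    _ = b i ^ 2 * ∑ j ∈ s i, a i j ^ 2 := by rw [mul_sum]

end SincProducts

section UniformPermutations

open Complex (I)
open Real (sinc)

lemma sum_range_succ_sq (n : ℕ) :
    ∑ j ∈ range n, ((j + 1 : ℕ) : ℝ) ^ 2 = n * (n + 1) * (2 * n + 1) / 6 := by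
  induction n with
  | zero => simp
  | succ n ih =>
    rw [sum_range_succ, ih]
    push_cast
    ring

variable {θ : ℕ → ℝ} {v : ℝ}

lemma tendsto_natCast_mul_of_cube (hθ : Tendsto (fun n : ℕ => (n : ℝ) ^ 3 * θ n ^ 2) atTop (𝓝 v)) :
    Tendsto (fun n : ℕ => n * θ n) atTop (𝓝 0) := by
  have hsq : Tendsto (fun n : ℕ => (n * θ n) ^ 2) atTop (𝓝 0) := by
    have hlim := hθ.mul (tendsto_inv_atTop_nhds_zero_nat (𝕜 := ℝ))
    rw [mul_zero] at hlim
    refine hlim.congr' ?_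
    filter_upwards [eventually_ne_atTop 0] with n hn
    field_simp
  rw [tendsto_zero_iff_abs_tendsto_zero]
  simpa [Function.comp_def, Real.sqrt_sq_eq_abs] using hsq.sqrt

lemma tendsto_prod_sinc_succ_mul
    (hθ : Tendsto (fun n : ℕ => (n : ℝ) ^ 3 * θ n ^ 2) atTop (𝓝 v)) :
    Tendsto (fun n => ∏ j ∈ range n, sinc ((j + 1 : ℕ) * (θ n / 2))) atTop
      (𝓝 (Real.exp (-(v / 72)))) := by
  have hsum : Tendsto (fun n => ∑ j ∈ range n, ((j + 1 : ℕ) * (θ n / 2)) ^ 2) atTop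
      (𝓝 (v / 12)) := by
    have hn := tendsto_inv_atTop_nhds_zero_nat (𝕜 := ℝ)
    have hlim := (hθ.div_const 24).mul ((hn.const_add 1).mul (hn.const_add 2))
    refine (hlim.congr' ?_).trans_eq (by ring_nf)
    filter_upwards [eventually_ne_atTop 0] with n hn
    simp_rw [mul_pow, ← sum_mul, sum_range_succ_sq]
    field_simp
    ring
  have habs (n : ℕ) : ∀ j ∈ range n, |((j + 1 : ℕ) : ℝ) * (θ n / 2)| ≤ |n * θ n| := by
    intro j hj
    have hjn : ((j + 1 : ℕ) : ℝ) ≤ n := mod_cast mem_range.1 hj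
    rw [abs_mul, abs_mul, abs_div, Nat.abs_cast, Nat.abs_cast, abs_two]
    gcongr
    exact half_le_self (abs_nonneg _)
  have h0 := (tendsto_natCast_mul_of_cube hθ).abs
  rw [abs_zero] at h0
  convert tendsto_prod_sinc h0 (.of_forall habs) hsum using 3
  ring

lemma tendsto_sinc_pow (hθ : Tendsto (fun n : ℕ => n * θ n) atTop (𝓝 0)) :
    Tendsto (fun n => sinc (θ n / 2) ^ n) atTop (𝓝 1) := by
  have hsum : Tendsto (fun n => ∑ _j ∈ range n, (θ n / 2) ^ 2) atTop (𝓝 0) := by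
    have hlim := ((hθ.pow 2).div_const 4).mul (tendsto_inv_atTop_nhds_zero_nat (𝕜 := ℝ))
    rw [mul_zero] at hlim
    refine hlim.congr fun n => ?_
    rw [sum_const, card_range, nsmul_eq_mul]
    obtain rfl | hn := eq_or_ne n 0
    · simp
    field_simp
    norm_num
  have habs (n : ℕ) : ∀ j ∈ range n, |θ n / 2| ≤ |n * θ n| := by
    intro j hj
    have hn : (1 : ℝ) ≤ n := mod_cast pos_of_gt (mem_range.1 hj)
    rw [abs_mul, abs_div, Nat.abs_cast, abs_two]
    nlinarith [abs_nonneg (θ n)]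
  have h0 := hθ.abs
  rw [abs_zero] at h0
  simpa using tendsto_prod_sinc h0 (.of_forall habs) hsum

lemma expect_exp_inversionCount_mul_sinc (θ : ℝ) (n : ℕ) :
    (𝔼 π : Equiv.Perm (Fin n),
        Complex.exp ((θ * (inversionCount π - (n : ℝ) ^ 2 / 4) : ℝ) * I)) * sinc (θ / 2) ^ n =
      Complex.exp ((-(n * θ / 4) : ℝ) * I) *
        ∏ j ∈ range n, (sinc ((j + 1 : ℕ) * (θ / 2)) : ℂ) := by
  have hcenter (π : Equiv.Perm (Fin n)) :
      Complex.exp ((θ * (inversionCount π - (n : ℝ) ^ 2 / 4) : ℝ) * I) =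
        Complex.exp ((-((n : ℝ) ^ 2 * θ / 4) : ℝ) * I) *
          Complex.exp (θ * I) ^ inversionCount π := by
    rw [← Complex.exp_nat_mul, ← Complex.exp_add]
    push_cast
    ring_nf
  have hphase : Complex.exp ((-(n * θ / 4) : ℝ) * I) =
      Complex.exp ((-((n : ℝ) ^ 2 * θ / 4) : ℝ) * I) *
        Complex.exp ((n * (n - 1) * θ / 4 : ℝ) * I) := by
    rw [← Complex.exp_add]
    push_cast
    ring_nf
  simp_rw [hcenter, ← mul_expect]
  rw [mul_assoc, expect_exp_pow_inversionCount_mul_sinc, hphase]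
  ring

lemma tendsto_expect_exp_inversionCount
    (hθ : Tendsto (fun n : ℕ => (n : ℝ) ^ 3 * θ n ^ 2) atTop (𝓝 v)) :
    Tendsto (fun n => 𝔼 π : Equiv.Perm (Fin n),
        Complex.exp ((θ n * (inversionCount π - (n : ℝ) ^ 2 / 4) : ℝ) * I)) atTop
      (𝓝 (Real.exp (-(v / 72)) : ℝ)) := by
  have hnθ := tendsto_natCast_mul_of_cube hθ
  have hpow := tendsto_sinc_pow hnθ
  have hphase : Tendsto (fun n : ℕ => Complex.exp ((-(n * θ n / 4) : ℝ) * I)) atTop (𝓝 1) := by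
    simpa using (((hnθ.div_const 4).neg.ofReal).mul_const I).cexp
  have hlim := (hphase.mul (tendsto_prod_sinc_succ_mul hθ).ofReal).div hpow.ofReal (by simp)
  simp only [Complex.ofReal_one, one_mul, div_one] at hlim
  refine hlim.congr' ?_
  filter_upwards [hpow.eventually_ne one_ne_zero] with n hn
  rw [Pi.div_apply, div_eq_iff (mod_cast hn)]
  simpa only [Complex.ofReal_prod, Complex.ofReal_pow] using
    (expect_exp_inversionCount_mul_sinc (θ n) n).symm

end UniformPermutations

section Occupancy

variable {ι α : Type*} [Fintype ι] [Fintype α] [DecidableEq α]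

lemma card_compl_image_sq_eq_sum (s : ι → α) :
    (#(univ.image s)ᶜ : ℝ) ^ 2 =
      ∑ a, ∑ b, if ∀ i, s i ∉ ({a, b} : Finset α) then 1 else 0 := by
  have hmiss : (#(univ.image s)ᶜ : ℝ) = ∑ a, if ∀ i, s i ≠ a then 1 else 0 := by
    rw [sum_boole]
    congr 2
    ext a
    simp
  rw [hmiss, sq, sum_mul_sum]
  refine sum_congr rfl fun a _ => sum_congr rfl fun b _ => ?_
  rw [ite_zero_mul_ite_zero, mul_one]
  simp only [mem_insert, mem_singleton, not_or, forall_and]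

variable [DecidableEq ι] [Nonempty α]

lemma expect_ite_forall_notMem_le (T : Finset α) :
    𝔼 s : ι → α, (if ∀ i, s i ∉ T then (1 : ℝ) else 0) ≤
      Real.exp (-(#T * Fintype.card ι / Fintype.card α)) := by
  have hT : (#Tᶜ : ℝ) / Fintype.card α = 1 - #T / Fintype.card α := by
    rw [card_compl, Nat.cast_sub T.card_le_univ]
    field_simp
  have hpi : ({s | ∀ i, s i ∉ T} : Finset (ι → α)) = Fintype.piFinset fun _ => Tᶜ := by
    ext s
    simp
  calc 𝔼 s : ι → α, (if ∀ i, s i ∉ T then (1 : ℝ) else 0)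
      = ((#Tᶜ : ℝ) / Fintype.card α) ^ Fintype.card ι := by
        rw [Fintype.expect_eq_sum_div_card, sum_boole, hpi, Fintype.card_piFinset, prod_const,
          card_univ, Fintype.card_fun, div_pow]
        push_cast
        rfl
    _ ≤ Real.exp (-(#T / Fintype.card α)) ^ Fintype.card ι := by
        gcongr
        rw [hT]
        exact Real.one_sub_le_exp_neg _
    _ = Real.exp (-(#T * Fintype.card ι / Fintype.card α)) := by
        rw [← Real.exp_nat_mul]
        ring_nf

lemma expect_card_compl_image_sq_le :
    𝔼 s : ι → α, (#(univ.image s)ᶜ : ℝ) ^ 2 ≤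
      Fintype.card α * Real.exp (-(Fintype.card ι / Fintype.card α)) +
        Fintype.card α ^ 2 * Real.exp (-(2 * (Fintype.card ι / Fintype.card α))) := by
  set q : ℝ := Fintype.card ι / Fintype.card α
  have pair_le (a b : α) :
      𝔼 s : ι → α, (if ∀ i, s i ∉ ({a, b} : Finset α) then (1 : ℝ) else 0) ≤
        (if a = b then Real.exp (-q) else 0) + Real.exp (-(2 * q)) := by
    refine (expect_ite_forall_notMem_le _).trans ?_
    obtain rfl | hab := eq_or_ne a b
    · simp [q, Real.exp_nonneg]
    · simp [hab, q, mul_div_assoc]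
  simp_rw [card_compl_image_sq_eq_sum, expect_sum_comm]
  refine (sum_le_sum fun a _ => sum_le_sum fun b _ => pair_le a b).trans_eq ?_
  simp only [sum_add_distrib, sum_ite_eq, mem_univ, if_true, sum_const, card_univ, nsmul_eq_mul]
  ring

end Occupancy

lemma mul_exp_add_sq_mul_exp_le {n : ℕ} {c ρ : ℝ} (hn : n ≠ 0) (hρ : Real.log n / 4 + c ≤ ρ) :
    n * Real.exp (-ρ) + n ^ 2 * Real.exp (-(2 * ρ)) ≤
      (n : ℝ) ^ (3 / 2 : ℝ) * (Real.exp (-c) + Real.exp (-c) ^ 2) := by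
  have hn' : (0 : ℝ) < n := mod_cast hn.bot_lt
  have hlog : 0 ≤ Real.log n := Real.log_natCast_nonneg n
  have single : n * Real.exp (-ρ) ≤ (n : ℝ) ^ (3 / 2 : ℝ) * Real.exp (-c) := by
    rw [Real.rpow_def_of_pos hn', ← Real.exp_add]
    nth_rw 1 [← Real.exp_log hn']
    rw [← Real.exp_add, Real.exp_le_exp]
    linarith
  have pair : n ^ 2 * Real.exp (-(2 * ρ)) ≤ (n : ℝ) ^ (3 / 2 : ℝ) * Real.exp (-c) ^ 2 := by
    rw [Real.rpow_def_of_pos hn', ← Real.exp_nat_mul, ← Real.exp_add]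
    nth_rw 1 [← Real.exp_log hn']
    rw [← Real.exp_nat_mul, ← Real.exp_add, Real.exp_le_exp]
    push_cast
    linarith
  linarith

section Comparison

open Complex (I)

lemma norm_exp_mul_I_sub_exp_mul_I_le (x y : ℝ) :
    ‖Complex.exp (x * I) - Complex.exp (y * I)‖ ≤ |x - y| := by
  calc ‖Complex.exp (x * I) - Complex.exp (y * I)‖
      = ‖Complex.exp (y * I) * (Complex.exp (I * (x - y : ℝ)) - 1)‖ := by
        rw [mul_sub, ← Complex.exp_add, mul_one]
        push_cast
        ring_nf
    _ ≤ |x - y| := by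
        rw [norm_mul, Complex.norm_exp_ofReal_mul_I, one_mul]
        exact Real.norm_exp_I_mul_ofReal_sub_one_le

variable {n r : ℕ}

lemma norm_expect_rttPerm_sub_expect_le [NeZero n] {𝕜 : Type*} [RCLike 𝕜]
    {F : Equiv.Perm (Fin n) → 𝕜} {K : ℝ} (hK : 0 ≤ K)
    (hF : ∀ π π', ‖F π - F π'‖ ≤ K * |(inversionCount π : ℝ) - inversionCount π'|) :
    ‖𝔼 s : Fin r → Fin n, F (rttPerm n r s) - 𝔼 π, F π‖ ≤
      K * 𝔼 s : Fin r → Fin n, (#(univ.image s)ᶜ : ℝ) ^ 2 := by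
  have coupled (s : Fin r → Fin n) (σ : Equiv.Perm (Fin n)) :
      ‖F (rttPerm n r s) - F (shuffle (List.ofFn s) σ)‖ ≤ K * (#(univ.image s)ᶜ : ℝ) ^ 2 := by
    have hs : (List.ofFn s).toFinset = univ.image s := by
      ext a
      simp [List.mem_ofFn]
    rw [← hs]
    exact (hF _ _).trans (mul_le_mul_of_nonneg_left
      (abs_inversionCount_shuffle_sub_le (List.ofFn s) 1 σ) hK)
  calc ‖𝔼 s : Fin r → Fin n, F (rttPerm n r s) - 𝔼 π, F π‖
      = ‖𝔼 s : Fin r → Fin n, 𝔼 σ, (F (rttPerm n r s) - F (shuffle (List.ofFn s) σ))‖ := by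
        rw [← expect_shuffle (r := r) F]
        simp only [expect_sub_distrib, Fintype.expect_const]
    _ ≤ 𝔼 s : Fin r → Fin n, 𝔼 σ : Equiv.Perm (Fin n),
          ‖F (rttPerm n r s) - F (shuffle (List.ofFn s) σ)‖ :=
        (RCLike.norm_expect_le (K := 𝕜)).trans
          (expect_le_expect fun _ _ => RCLike.norm_expect_le (K := 𝕜))
    _ ≤ 𝔼 s : Fin r → Fin n, 𝔼 _σ : Equiv.Perm (Fin n), K * (#(univ.image s)ᶜ : ℝ) ^ 2 :=
        expect_le_expect fun s _ => expect_le_expect fun σ _ => coupled s σ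
    _ = K * 𝔼 s : Fin r → Fin n, (#(univ.image s)ᶜ : ℝ) ^ 2 := by
        simp_rw [Fintype.expect_const, mul_expect]

lemma norm_expect_exp_rttPerm_sub_le [NeZero n] {c : ℝ} (hr : n * Real.log n / 4 + c * n ≤ r)
    (t : ℝ) :
    ‖𝔼 s : Fin r → Fin n, Complex.exp ((t / (n : ℝ) ^ (3 / 2 : ℝ) *
          (inversionCount (rttPerm n r s) - (n : ℝ) ^ 2 / 4) : ℝ) * I) -
        𝔼 π : Equiv.Perm (Fin n), Complex.exp ((t / (n : ℝ) ^ (3 / 2 : ℝ) *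
          (inversionCount π - (n : ℝ) ^ 2 / 4) : ℝ) * I)‖ ≤
      |t| * (Real.exp (-c) + Real.exp (-c) ^ 2) := by
  have hn : (0 : ℝ) < n := mod_cast NeZero.pos n
  have hB : (0 : ℝ) < (n : ℝ) ^ (3 / 2 : ℝ) := by positivity
  set θ := t / (n : ℝ) ^ (3 / 2 : ℝ) with hθ
  have hrate : Real.log n / 4 + c ≤ r / n := by
    rw [le_div_iff₀ hn]
    linarith
  have hunselected : 𝔼 s : Fin r → Fin n, (#(univ.image s)ᶜ : ℝ) ^ 2 ≤
      (n : ℝ) ^ (3 / 2 : ℝ) * (Real.exp (-c) + Real.exp (-c) ^ 2) := by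
    simpa using (expect_card_compl_image_sq_le (ι := Fin r) (α := Fin n)).trans
      (by simpa using mul_exp_add_sq_mul_exp_le (NeZero.ne n) hrate)
  refine (norm_expect_rttPerm_sub_expect_le (K := |θ|) (F := fun π =>
    Complex.exp ((θ * (inversionCount π - (n : ℝ) ^ 2 / 4) : ℝ) * I)) (abs_nonneg _)
    fun π π' => ?_).trans ?_
  · refine (norm_exp_mul_I_sub_exp_mul_I_le _ _).trans_eq ?_
    rw [← abs_mul]
    ring_nf
  · refine (mul_le_mul_of_nonneg_left hunselected (abs_nonneg θ)).trans_eq ?_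
    rw [hθ, abs_div, abs_of_pos hB]
    field_simp

lemma tendsto_expect_exp_rttPerm {r : ℕ → ℕ} {c : ℕ → ℝ} (hc : Tendsto c atTop atTop)
    (hr : ∀ n : ℕ, n * Real.log n / 4 + c n * n ≤ r n) (t : ℝ) :
    Tendsto (fun n : ℕ => 𝔼 s : Fin (r n) → Fin n, Complex.exp ((t / (n : ℝ) ^ (3 / 2 : ℝ) *
        (inversionCount (rttPerm n (r n) s) - (n : ℝ) ^ 2 / 4) : ℝ) * I)) atTop
      (𝓝 (Real.exp (-(t ^ 2 / 72)) : ℝ)) := by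
  have hscale : Tendsto (fun n : ℕ => (n : ℝ) ^ 3 * (t / (n : ℝ) ^ (3 / 2 : ℝ)) ^ 2) atTop
      (𝓝 (t ^ 2)) := by
    refine tendsto_const_nhds.congr' ?_
    filter_upwards [eventually_ne_atTop 0] with n hn
    rw [div_pow, ← Real.rpow_mul_natCast n.cast_nonneg,
      show (3 / 2 : ℝ) * (2 : ℕ) = (3 : ℕ) by norm_num, Real.rpow_natCast]
    field_simp
  have hexp : Tendsto (fun n => Real.exp (-c n)) atTop (𝓝 0) :=
    Real.tendsto_exp_neg_atTop_nhds_zero.comp hc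
  have hbound : Tendsto (fun n => |t| * (Real.exp (-c n) + Real.exp (-c n) ^ 2)) atTop (𝓝 0) := by
    simpa using (hexp.add (hexp.pow 2)).const_mul |t|
  refine (tendsto_expect_exp_inversionCount hscale).congr_dist
    (squeeze_zero' (.of_forall fun _ => dist_nonneg) ?_ hbound)
  filter_upwards [eventually_ne_atTop 0] with n hn
  have : NeZero n := ⟨hn⟩
  rw [dist_comm, dist_eq_norm]
  exact norm_expect_exp_rttPerm_sub_le (hr n) t

end Comparison

lemma tendsto_expect_of_tendsto_charFun {α : ℕ → Type*} [∀ n, Fintype (α n)]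
    [∀ n, Nonempty (α n)] {X : ∀ n, α n → ℝ} {μ : Measure ℝ} [IsProbabilityMeasure μ]
    (hX : ∀ t : ℝ, Tendsto (fun n => 𝔼 x, Complex.exp (t * X n x * Complex.I)) atTop
      (𝓝 (charFun μ t))) (g : BoundedContinuousFunction ℝ ℝ) :
    Tendsto (fun n => 𝔼 x, g (X n x)) atTop (𝓝 (∫ x, g x ∂μ)) := by
  let _ (n : ℕ) : MeasurableSpace (α n) := ⊤
  let unif (n : ℕ) : Measure (α n) := (PMF.uniformOfFintype (α n)).toMeasure
  let law (n : ℕ) : ProbabilityMeasure ℝ :=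
    ⟨(unif n).map (X n), Measure.isProbabilityMeasure_map measurable_from_top.aemeasurable⟩
  let ν : ProbabilityMeasure ℝ := ⟨μ, inferInstance⟩
  have integral_law {𝕜 : Type} [RCLike 𝕜] (n : ℕ) {f : ℝ → 𝕜} (hf : Continuous f) :
      ∫ x, f x ∂(unif n).map (X n) = 𝔼 x, f (X n x) := by
    rw [integral_map measurable_from_top.aemeasurable hf.aestronglyMeasurable,
      PMF.integral_eq_sum, Fintype.expect_eq_sum_div_card, sum_div]
    refine sum_congr rfl fun x _ => ?_
    simp [div_eq_inv_mul, RCLike.real_smul_eq_coe_mul]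
  have hlaw : Tendsto law atTop (𝓝 ν) := by
    refine ProbabilityMeasure.tendsto_iff_tendsto_charFun.2 fun t => (hX t).congr fun n => ?_
    exact ((charFun_apply_real t).trans (integral_law n (by fun_prop))).symm
  refine (ProbabilityMeasure.tendsto_iff_forall_integral_tendsto.1 hlaw g).congr fun n => ?_
  exact integral_law n g.continuous

/-- **Theorem (inversions, mixed regime).** If `(r n)` are positive integers with
`r n ≥ (n log n)/4 + cₙ n` for some sequence `cₙ → ∞`, then `(I - n²/4)/n^{3/2}` converges
in distribution (tested against every bounded continuous function) to `N(0, 1/36)`. -/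
theorem rtt_inversions_mixed (r : ℕ → ℕ) (hrpos : ∀ n, 0 < r n) (cseq : ℕ → ℝ)
    (hcseq : Tendsto cseq atTop atTop)
    (hr : ∀ n : ℕ, (n : ℝ) * Real.log n / 4 + cseq n * n ≤ (r n : ℝ)) :
    ∀ g : BoundedContinuousFunction ℝ ℝ,
      Tendsto
        (fun n : ℕ =>
          unifExpect (fun s : Fin (r n) → Fin n =>
            g (((inversionCount (rttPerm n (r n) s) : ℝ) - (n : ℝ) ^ 2 / 4) /
              (n : ℝ) ^ ((3 : ℝ) / 2))))
        atTop
        (𝓝 (∫ x, g x ∂(gaussianReal 0 (1 / 36 : ℝ≥0)))) := by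
  intro g
  rw [← tendsto_add_atTop_iff_nat 1]
  simp_rw [unifExpect, ← Fintype.expect_eq_sum_div_card]
  refine tendsto_expect_of_tendsto_charFun (fun t => ?_) g
  have hlim := (tendsto_add_atTop_iff_nat 1).2 (tendsto_expect_exp_rttPerm hcseq hr t)
  have hgauss : charFun (gaussianReal 0 (1 / 36 : ℝ≥0)) t = (Real.exp (-(t ^ 2 / 72)) : ℝ) := by
    rw [charFun_gaussianReal]
    push_cast
    ring_nf
  rw [hgauss]
  refine hlim.congr fun n => expect_congr rfl fun s _ => ?_
  push_cast
  ring_nf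
end

section
/- Fix a constant c > 0, and for each n let K^{⌊cn⌋}_n be the number of distinct values taken by ⌊cn⌋ independent uniform random samples from [n]. Then (K^{⌊cn⌋}_n − n(1 − e^{−c})) / √(n(e^{−c} − (1+c)e^{−2c})) converges in distribution, as n → ∞, to a standard normal random variable. -/
open MeasureTheory ProbabilityTheory Filter Finset Topology
open scoped NNReal

/-!
Throwing `r` balls into `n` boxes has the same law as filling the boxes with independent
Poisson(`c`) contents conditioned on the total being `r`. Fourier inversion in the total therefore
writes the characteristic function of the number of occupied boxes, multiplied by the Poisson
probability of the total `r`, as the integral over `φ ∈ [-π, π]` of the `n`-th power of the joint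
characteristic function of the occupation indicator and the content of one box. After centring and
the substitution `φ = u / √n`, the one-box function has a second-order expansion and is bounded by
a Gaussian, so for `r = cn + o(√n)` the integral is asymptotic to a Gaussian one. Completing the
square in `u` leaves the variance of the occupation indicator after linear regression on the
content. Dividing by the case `θ = 0` removes the Poisson probability, and Lévy's continuity
theorem concludes.
-/

open Complex (I)
open scoped Real Complex

section GeneratingFunction

variable {ι α R : Type*} [Fintype ι] [DecidableEq ι] [Fintype α] [DecidableEq α] [CommRing R]

lemma sum_pow_card_mul_one_sub_pow_of_subset (z : R) (S : Finset α) :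
    ∑ T with S ⊆ T, z ^ #T * (1 - z) ^ (Fintype.card α - #T) = z ^ #S := by
  have prod_eq : ∏ i, (z + if i ∈ S then 0 else 1 - z) = z ^ #S := by
    have (i : α) : (z + if i ∈ S then 0 else 1 - z) = if i ∈ S then z else 1 := by
      split_ifs <;> ring
    simp [this]
  rw [← prod_eq, Finset.prod_add, powerset_univ, sum_filter]
  refine sum_congr rfl fun T _ ↦ ?_
  split_ifs with hS
  · have complement : ∏ i ∈ univ \ T, (if i ∈ S then 0 else 1 - z) =
        ∏ i ∈ univ \ T, (1 - z) :=
      prod_congr rfl fun i hi ↦ if_neg fun hiS ↦ (mem_sdiff.1 hi).2 (hS hiS)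
    rw [complement, prod_const, prod_const, card_univ_sdiff]
  · obtain ⟨i, hiS, hiT⟩ := not_subset.1 hS
    rw [prod_eq_zero (i := i) (s := univ \ T) (by simp [hiT]) (by simp [hiS]), mul_zero]

/-- For `0 ≤ z ≤ 1`, mark every point of `α` independently with probability `z`: both sides
compute the expected number of maps `ι → α` all of whose values are marked. -/
lemma sum_pow_card_image (z : R) :
    ∑ s : ι → α, z ^ #(univ.image s) =
      ∑ T : Finset α, z ^ #T * (1 - z) ^ (Fintype.card α - #T) * (#T : R) ^ Fintype.card ι := by
  have card_maps (T : Finset α) : #{s : ι → α | univ.image s ⊆ T} = #T ^ Fintype.card ι := by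
    have : ({s : ι → α | univ.image s ⊆ T} : Finset _) = Fintype.piFinset fun _ ↦ T := by
      ext s
      simp [image_subset_iff]
    simp [this, Fintype.card_piFinset]
  calc ∑ s : ι → α, z ^ #(univ.image s)
      = ∑ s : ι → α, ∑ T with univ.image s ⊆ T, z ^ #T * (1 - z) ^ (Fintype.card α - #T) := by
        simp only [sum_pow_card_mul_one_sub_pow_of_subset]
    _ = ∑ T : Finset α, ∑ s : ι → α with univ.image s ⊆ T,
          z ^ #T * (1 - z) ^ (Fintype.card α - #T) := by
        simp only [sum_filter]
        exact sum_comm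
    _ = _ := by
        simp only [sum_const, card_maps, nsmul_eq_mul, Nat.cast_pow, mul_comm]

lemma iteratedDeriv_one_add_mul_exp_sub_one_pow (z : ℂ) :
    iteratedDeriv (Fintype.card ι) (fun w ↦ (1 + z * (cexp w - 1)) ^ Fintype.card α) 0 =
      ∑ s : ι → α, z ^ #(univ.image s) := by
  have binomial : (fun w ↦ (1 + z * (cexp w - 1)) ^ Fintype.card α) = fun w ↦
      ∑ T : Finset α, z ^ #T * (1 - z) ^ (Fintype.card α - #T) * cexp (#T * w) := by
    funext w
    rw [show 1 + z * (cexp w - 1) = z * cexp w + (1 - z) by ring,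
      ← Fintype.sum_pow_mul_eq_add_pow]
    refine sum_congr rfl fun T _ ↦ ?_
    rw [mul_pow, Complex.exp_nat_mul]
    ring
  rw [binomial, sum_pow_card_image, iteratedDeriv_fun_sum fun T _ ↦ by fun_prop]
  refine sum_congr rfl fun T _ ↦ ?_
  rw [iteratedDeriv_const_mul_field, iteratedDeriv_cexp_const_mul]
  simp

end GeneratingFunction

section Analysis

lemma integral_exp_neg_smul_circleMap {E : Type*} [NormedAddCommGroup E] [NormedSpace ℂ E]
    [CompleteSpace E] {f : ℂ → E} {a : ℂ} {R : ℝ} (hR : 0 < R)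
    (hf : DiffContOnCl ℂ f (Metric.ball a R)) (r : ℕ) :
    ∫ φ in -π..π, cexp (-(r * φ * I)) • f (circleMap a R φ) =
      (2 * π * (R ^ r / r.factorial) : ℂ) • iteratedDeriv r f a := by
  have hRC : (R : ℂ) ≠ 0 := mod_cast hR.ne'
  have periodic : Function.Periodic
      (fun φ : ℝ ↦ cexp (-(r * φ * I)) • f (circleMap a R φ)) (2 * π) := fun φ ↦ by
    simp only [periodic_circleMap a R φ]
    congr 1
    rw [Complex.exp_eq_exp_iff_exists_int]
    exact ⟨-r, by push_cast; ring⟩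
  have shift : ∫ φ in -π..π, cexp (-(r * φ * I)) • f (circleMap a R φ) =
      ∫ φ in 0..2 * π, cexp (-(r * φ * I)) • f (circleMap a R φ) := by
    simpa [show -π + 2 * π = π by ring] using periodic.intervalIntegral_add_eq (-π) 0
  have integrand (φ : ℝ) : deriv (circleMap a R) φ •
      ((1 / (circleMap a R φ - a) ^ (r + 1)) • f (circleMap a R φ)) =
        (I / R ^ r : ℂ) • (cexp (-(r * φ * I)) • f (circleMap a R φ)) := by
    rw [deriv_circleMap, circleMap_sub_center, circleMap_zero, smul_smul, smul_smul]
    congr 1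
    rw [mul_assoc (r : ℂ), Complex.exp_neg, Complex.exp_nat_mul]
    field_simp [Complex.exp_ne_zero]
    ring
  have cauchy := hf.circleIntegral_one_div_sub_center_pow_smul hR r
  simp only [circleIntegral, integrand, intervalIntegral.integral_smul] at cauchy
  rw [shift, ← inv_smul_smul₀ (div_ne_zero Complex.I_ne_zero (pow_ne_zero r hRC))
    (∫ φ in 0..2 * π, _), cauchy, smul_smul]
  congr 1
  field_simp [Complex.I_ne_zero]

lemma tendsto_inv_sqrt_natCast_nhdsNE : Tendsto (fun n : ℕ ↦ (√n)⁻¹) atTop (𝓝[≠] 0) :=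
  tendsto_nhdsWithin_mono_right (fun _ ↦ ne_of_gt) <|
    tendsto_inv_atTop_nhdsGT_zero.comp
      (Real.tendsto_sqrt_atTop.comp tendsto_natCast_atTop_atTop)

lemma tendsto_comp_inv_sqrt_pow {f : ℝ → ℂ} (hf : ContDiff ℝ 2 f) (h0 : f 0 = 1)
    (h1 : deriv f 0 = 0) :
    Tendsto (fun n : ℕ ↦ f (√n)⁻¹ ^ n) atTop (𝓝 (cexp (iteratedDeriv 2 f 0 / 2))) := by
  have taylor (t : ℝ) : taylorWithinEval f 2 Set.univ 0 t =
      1 + t ^ 2 * (iteratedDeriv 2 f 0 / 2) := by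
    simp only [taylorWithinEval_succ, taylor_within_zero_eval, iteratedDerivWithin_univ, h0, h1,
      zero_add, Nat.reduceAdd, iteratedDeriv_one, smul_zero, add_zero, sub_zero, Complex.real_smul]
    push_cast [Nat.factorial]
    ring
  refine Complex.tendsto_pow_exp_of_isLittleO_sub_add_div _ ?_
  have remainder := (taylor_isLittleO_univ (x₀ := 0) hf).comp_tendsto
    (tendsto_nhds_of_tendsto_nhdsWithin tendsto_inv_sqrt_natCast_nhdsNE)
  refine (remainder.norm_right.congr (fun n ↦ ?_) fun n ↦ ?_).of_norm_right
  · simp only [Function.comp_apply, taylor, ← Complex.ofReal_pow, inv_pow,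
      Real.sq_sqrt n.cast_nonneg]
    push_cast
    ring
  · simp

lemma integral_indicator_comp_mul_inv {E : Type*} [NormedAddCommGroup E] [NormedSpace ℝ E]
    (f : ℝ → E) {a b : ℝ} (ha : 0 ≤ a) (hb : 0 < b) :
    ∫ u, (Set.Ioc (-(a * b)) (a * b)).indicator (fun u ↦ f (u * b⁻¹)) u =
      b • ∫ φ in -a..a, f φ := by
  rw [integral_indicator measurableSet_Ioc,
    ← intervalIntegral.integral_of_le (by linarith [mul_nonneg ha hb.le]),
    intervalIntegral.integral_comp_mul_right _ (inv_ne_zero hb.ne'), inv_inv]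
  simp [hb.ne']

/-- Laplace's method: after the substitution `φ = u / √n` the Gaussian bound dominates the
integrand uniformly in `n`. -/
lemma tendsto_sqrt_smul_intervalIntegral {E : Type*} [NormedAddCommGroup E] [NormedSpace ℝ E]
    {h : ℕ → ℝ → E} {g : ℝ → E} {a δ : ℝ} (ha : 0 < a) (hδ : 0 < δ)
    (hcont : ∀ n, Continuous (h n))
    (hbound : ∀ n : ℕ, ∀ φ, |φ| ≤ a → ‖h n φ‖ ≤ rexp (-δ * (n * φ ^ 2)))
    (hlim : ∀ u, Tendsto (fun n : ℕ ↦ h n (u * (√n)⁻¹)) atTop (𝓝 (g u))) :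
    Tendsto (fun n : ℕ ↦ √n • ∫ φ in -a..a, h n φ) atTop (𝓝 (∫ u, g u)) := by
  set H : ℕ → ℝ → E := fun n ↦
    (Set.Ioc (-(a * √n)) (a * √n)).indicator fun u ↦ h n (u * (√n)⁻¹)
  have dominated (n : ℕ) (hn : 0 < n) (u : ℝ) : ‖H n u‖ ≤ rexp (-δ * u ^ 2) := by
    have hs : 0 < √(n : ℝ) := by positivity
    by_cases hu : u ∈ Set.Ioc (-(a * √n)) (a * √n)
    · have hφ : |u * (√n)⁻¹| ≤ a := by
        rw [← div_eq_mul_inv, abs_div, abs_of_pos hs, div_le_iff₀ hs, abs_le]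
        exact ⟨hu.1.le, hu.2⟩
      have hsq : n * (u * (√n)⁻¹) ^ 2 = u ^ 2 := by
        rw [mul_pow, inv_pow, Real.sq_sqrt n.cast_nonneg]
        field_simp
      simpa only [H, Set.indicator_of_mem hu, hsq] using hbound n _ hφ
    · simp only [H, Set.indicator_of_notMem hu, norm_zero]
      positivity
  have pointwise (u : ℝ) : Tendsto (fun n ↦ H n u) atTop (𝓝 (g u)) := by
    refine (hlim u).congr' ?_
    have hs : Tendsto (fun n : ℕ ↦ √(n : ℝ)) atTop atTop :=
      Real.tendsto_sqrt_atTop.comp tendsto_natCast_atTop_atTop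
    filter_upwards [hs.eventually_gt_atTop (|u| / a)] with n hn
    rw [div_lt_iff₀' ha, abs_lt] at hn
    have hu : u ∈ Set.Ioc (-(a * √n)) (a * √n) := ⟨hn.1, hn.2.le⟩
    simp only [H, Set.indicator_of_mem hu]
  refine Tendsto.congr' ?_ (tendsto_integral_filter_of_dominated_convergence
    (fun u ↦ rexp (-δ * u ^ 2)) ?_ ?_ (integrable_exp_neg_mul_sq hδ) (ae_of_all _ pointwise))
  · filter_upwards [eventually_gt_atTop 0] with n hn
    exact integral_indicator_comp_mul_inv (h n) ha.le (by positivity)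
  · exact .of_forall fun n ↦
      ((hcont n).comp (by fun_prop)).aestronglyMeasurable.indicator measurableSet_Ioc
  · filter_upwards [eventually_gt_atTop 0] with n hn using ae_of_all _ (dominated n hn)

end Analysis

section BoxCharFun

/-- The joint characteristic function `E exp(i(θ 1_{N > 0} + φ N))` of the occupation indicator and
the content `N` of a single box, when `N` has the Poisson distribution with mean `c`. -/
noncomputable def boxCharFun (c θ φ : ℝ) : ℂ :=
  cexp (-c) * (1 + cexp (θ * I) * (cexp (c * cexp (φ * I)) - 1))

lemma continuous_boxCharFun (c θ : ℝ) : Continuous (boxCharFun c θ) := by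
  unfold boxCharFun
  fun_prop

lemma norm_one_add_mul_exp_mul_I_le {b : ℝ} (hb : 0 ≤ b) (φ : ℝ) :
    ‖1 + b * cexp (φ * I)‖ ≤ 1 + b - b / (1 + b) * (1 - Real.cos φ) := by
  have norm_sq : ‖1 + b * cexp (φ * I)‖ ^ 2 = (1 + b) ^ 2 - 2 * b * (1 - Real.cos φ) := by
    rw [Complex.sq_norm, Complex.normSq_apply]
    simp only [Complex.add_re, Complex.add_im, Complex.re_ofReal_mul, Complex.im_ofReal_mul,
      Complex.exp_ofReal_mul_I_re, Complex.exp_ofReal_mul_I_im, Complex.one_re, Complex.one_im]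
    linear_combination b ^ 2 * Real.sin_sq_add_cos_sq φ
  have cross : (1 + b) * (b / (1 + b) * (1 - Real.cos φ)) = b * (1 - Real.cos φ) := by
    field_simp
  have nonneg : 0 ≤ 1 + b - b / (1 + b) * (1 - Real.cos φ) := by
    refine nonneg_of_mul_nonneg_right (a := 1 + b) ?_ (by positivity)
    nlinarith [Real.neg_one_le_cos φ]
  refine abs_le_of_sq_le_sq' ?_ nonneg |>.2
  rw [norm_sq]
  nlinarith [sq_nonneg (b / (1 + b) * (1 - Real.cos φ))]

/-- The terms `w + w ^ 2 / 2` of the exponential series at `w = c * exp (φ * I)` give the gain: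
their arguments differ unless `φ ∈ 2πℤ`. -/
lemma norm_exp_mul_exp_mul_I_sub_one_le {c : ℝ} (hc : 0 ≤ c) (φ : ℝ) :
    ‖cexp (c * cexp (φ * I)) - 1‖ ≤ rexp c - 1 - c ^ 2 / (2 + c) * (1 - Real.cos φ) := by
  set w : ℂ := c * cexp (φ * I) with hw
  have norm_w : ‖w‖ = c := by simp [hw, hc]
  have tail : ‖cexp w - (1 + w + w ^ 2 / 2)‖ ≤ rexp c - (1 + c + c ^ 2 / 2) := by
    simpa [norm_w, sum_range_succ, Nat.factorial] using
      Complex.norm_exp_sub_sum_le_exp_norm_sub_sum w 3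
  have head : ‖w + w ^ 2 / 2‖ ≤ c + c ^ 2 / 2 - c ^ 2 / (2 + c) * (1 - Real.cos φ) :=
    calc ‖w + w ^ 2 / 2‖ = ‖w * (1 + (c / 2 : ℝ) * cexp (φ * I))‖ := by
          congr 1
          rw [hw]
          push_cast
          ring
      _ ≤ c * (1 + c / 2 - c / 2 / (1 + c / 2) * (1 - Real.cos φ)) := by
          rw [norm_mul, norm_w]
          gcongr
          exact norm_one_add_mul_exp_mul_I_le (by positivity) φ
      _ = _ := by
          field_simp
  calc ‖cexp w - 1‖ = ‖(cexp w - (1 + w + w ^ 2 / 2)) + (w + w ^ 2 / 2)‖ := by ring_nf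
    _ ≤ _ := by linarith [norm_add_le (cexp w - (1 + w + w ^ 2 / 2)) (w + w ^ 2 / 2)]

lemma norm_boxCharFun_le {c : ℝ} (hc : 0 ≤ c) (θ φ : ℝ) :
    ‖boxCharFun c θ φ‖ ≤ rexp (-(rexp (-c) * (c ^ 2 / (2 + c)) * (1 - Real.cos φ))) :=
  calc ‖boxCharFun c θ φ‖
      = rexp (-c) * ‖1 + cexp (θ * I) * (cexp (c * cexp (φ * I)) - 1)‖ := by
        simp [boxCharFun, Complex.norm_exp]
    _ ≤ rexp (-c) * (1 + (rexp c - 1 - c ^ 2 / (2 + c) * (1 - Real.cos φ))) := by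
        gcongr
        refine (norm_add_le _ _).trans ?_
        rw [norm_one, norm_mul, Complex.norm_exp_ofReal_mul_I, one_mul]
        gcongr
        exact norm_exp_mul_exp_mul_I_sub_one_le hc φ
    _ = -(rexp (-c) * (c ^ 2 / (2 + c)) * (1 - Real.cos φ)) + 1 := by
        have : rexp (-c) * rexp c = 1 := by simp [← Real.exp_add]
        linear_combination this
    _ ≤ _ := Real.add_one_le_exp _

lemma exists_norm_boxCharFun_le_exp_neg_mul_sq {c : ℝ} (hc : 0 < c) :
    ∃ δ > 0, ∀ θ φ : ℝ, |φ| ≤ π → ‖boxCharFun c θ φ‖ ≤ rexp (-δ * φ ^ 2) := by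
  refine ⟨rexp (-c) * (c ^ 2 / (2 + c)) * (2 / π ^ 2), by positivity, fun θ φ hφ ↦ ?_⟩
  refine (norm_boxCharFun_le hc.le θ φ).trans (Real.exp_le_exp.2 ?_)
  have hcos : 2 / π ^ 2 * φ ^ 2 ≤ 1 - Real.cos φ := by
    linarith [Real.cos_le_one_sub_mul_cos_sq hφ]
  rw [neg_mul, neg_le_neg_iff, mul_assoc]
  gcongr

/-- Fourier inversion: both sides are `2π E[exp(iθK) 1_{S = r}]`, where `S` is the total content
and `K` the number of occupied boxes among `n` independent Poisson boxes; given `S = r` the content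
is that of `r` balls thrown uniformly. -/
lemma integral_exp_neg_mul_boxCharFun_pow {c : ℝ} (hc : 0 < c) (θ : ℝ) (n r : ℕ) :
    ∫ φ in -π..π, cexp (-(r * φ * I)) * boxCharFun c θ φ ^ n =
      2 * π * (rexp (-(c * n)) * (c ^ r / r.factorial) : ℝ) *
        ∑ s : Fin r → Fin n, cexp (θ * distinctCount n r s * I) := by
  have integrand (φ : ℝ) : cexp (-(r * φ * I)) * boxCharFun c θ φ ^ n =
      rexp (-(c * n)) * (cexp (-(r * φ * I)) •
        (1 + cexp (θ * I) * (cexp (circleMap 0 c φ) - 1)) ^ n) := by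
    rw [boxCharFun, circleMap_zero, mul_pow, ← Complex.exp_nat_mul, smul_eq_mul]
    push_cast
    ring_nf
  have cauchy := integral_exp_neg_smul_circleMap
    (f := fun w ↦ (1 + cexp (θ * I) * (cexp w - 1)) ^ n) (a := 0) hc
    (Differentiable.diffContOnCl (by fun_prop)) r
  have coefficient := iteratedDeriv_one_add_mul_exp_sub_one_pow
    (ι := Fin r) (α := Fin n) (cexp (θ * I))
  simp only [Fintype.card_fin] at coefficient
  simp only [integrand, intervalIntegral.integral_const_mul]
  rw [cauchy, coefficient, smul_eq_mul, ← mul_assoc]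
  congr 1
  · push_cast
    ring
  · refine sum_congr rfl fun s _ ↦ ?_
    rw [← Complex.exp_nat_mul, distinctCount]
    ring_nf

end BoxCharFun

section LocalLimit

/-- The variance, per box, left in the occupation indicator `1_{N > 0}` after linear regression on
the content `N`, for `N` Poisson with mean `c`. -/
noncomputable def occupancyVariance (c : ℝ) : ℝ :=
  rexp (-c) - (1 + c) * rexp (-2 * c)

lemma occupancyVariance_pos {c : ℝ} (hc : c ≠ 0) : 0 < occupancyVariance c := by
  have factor : occupancyVariance c = (rexp c - (c + 1)) * rexp (-2 * c) := by
    rw [occupancyVariance, sub_mul, ← Real.exp_add]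
    ring_nf
  rw [factor]
  exact mul_pos (sub_pos.2 (Real.add_one_lt_exp hc)) (Real.exp_pos _)

/-- The characteristic function at `t` of `θ 1_{N > 0} + u N`, centred at its mean
`(1 - e⁻ᶜ) θ + c u`, for `N` Poisson with mean `c`. -/
noncomputable def centeredBoxCharFun (c θ u t : ℝ) : ℂ :=
  boxCharFun c (θ * t) (u * t) * cexp (-(((1 - rexp (-c)) * θ + c * u) * t * I))

lemma contDiff_centeredBoxCharFun (c θ u : ℝ) : ContDiff ℝ 2 (centeredBoxCharFun c θ u) := by
  have (z : ℂ) : ContDiff ℝ 2 fun t : ℝ ↦ z * t :=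
    contDiff_const.mul Complex.ofRealCLM.contDiff
  unfold centeredBoxCharFun boxCharFun
  push_cast
  fun_prop

lemma centeredBoxCharFun_zero (c θ u : ℝ) : centeredBoxCharFun c θ u 0 = 1 := by
  simp [centeredBoxCharFun, boxCharFun, ← Complex.exp_add]

lemma hasDerivAt_cexp_mul_ofReal (z : ℂ) (t : ℝ) :
    HasDerivAt (fun t : ℝ ↦ cexp (z * t)) (z * cexp (z * t)) t := by
  simpa [mul_comm] using ((hasDerivAt_id (t : ℂ)).const_mul z).cexp.comp_ofReal

lemma centeredBoxCharFun_eq {c θ u m : ℝ} (hm : m = (1 - rexp (-c)) * θ + c * u) (t : ℝ) :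
    centeredBoxCharFun c θ u t =
      rexp (-c) * (cexp (-m * I * t) - cexp ((θ - m) * I * t)) +
        cexp ((θ - m) * I * t) * cexp (c * (cexp (u * I * t) - 1)) := by
  have split_indicator : cexp ((θ - m) * I * t) = cexp (θ * t * I) * cexp (-m * I * t) := by
    rw [← Complex.exp_add]
    ring_nf
  have split_content : cexp (c * (cexp (u * I * t) - 1)) =
      cexp (c * cexp (u * t * I)) * cexp (-c) := by
    rw [← Complex.exp_add]
    ring_nf
  have centering : cexp (-(((1 - rexp (-c)) * θ + c * u) * t * I)) = cexp (-m * I * t) := by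
    rw [hm]
    push_cast
    ring_nf
  rw [centeredBoxCharFun, boxCharFun, split_indicator, split_content, centering]
  push_cast
  ring

lemma hasDerivAt_centeredBoxCharFun {c θ u m : ℝ} (hm : m = (1 - rexp (-c)) * θ + c * u) (t : ℝ) :
    HasDerivAt (centeredBoxCharFun c θ u)
      (rexp (-c) * (-m * I * cexp (-m * I * t) - (θ - m) * I * cexp ((θ - m) * I * t)) +
        ((θ - m) * I + c * (u * I * cexp (u * I * t))) *
          (cexp ((θ - m) * I * t) * cexp (c * (cexp (u * I * t) - 1)))) t := by
  rw [funext (centeredBoxCharFun_eq hm)]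
  have hE := hasDerivAt_cexp_mul_ofReal
  refine ((((hE (-m * I) t).sub (hE ((θ - m) * I) t)).const_mul _).add
    ((hE ((θ - m) * I) t).mul (((hE (u * I) t).sub_const 1).const_mul _).cexp)).congr_deriv ?_
  ring

lemma deriv_centeredBoxCharFun_zero (c θ u : ℝ) : deriv (centeredBoxCharFun c θ u) 0 = 0 := by
  rw [(hasDerivAt_centeredBoxCharFun rfl 0).deriv]
  push_cast
  simp only [mul_zero, Complex.exp_zero, sub_self]
  ring

lemma iteratedDeriv_two_centeredBoxCharFun_zero (c θ u : ℝ) :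
    iteratedDeriv 2 (centeredBoxCharFun c θ u) 0 =
      (-(θ ^ 2 * occupancyVariance c + c * (u + θ * rexp (-c)) ^ 2) : ℝ) := by
  set m : ℝ := (1 - rexp (-c)) * θ + c * u with hm
  have hE (z : ℂ) := hasDerivAt_cexp_mul_ofReal z 0
  have exp_two : rexp (-2 * c) = rexp (-c) ^ 2 := by
    rw [← Real.exp_nat_mul]
    ring_nf
  rw [iteratedDeriv_succ, iteratedDeriv_one,
    funext fun t ↦ (hasDerivAt_centeredBoxCharFun hm t).deriv]
  refine HasDerivAt.deriv ?_
  refine (((((hE (-m * I)).const_mul _).sub ((hE ((θ - m) * I)).const_mul _)).const_mul _).add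
    (((((hE (u * I)).const_mul _).const_mul _).const_add _).mul
      ((hE ((θ - m) * I)).mul (((hE (u * I)).sub_const 1).const_mul _).cexp))).congr_deriv ?_
  simp only [Pi.mul_apply, Complex.ofReal_zero, mul_zero, Complex.exp_zero, sub_self,
    occupancyVariance, exp_two, hm]
  push_cast
  ring_nf
  simp only [Complex.I_sq]
  ring

/-- The integrand of the Fourier inversion formula for the characteristic function at `θ / √n` of
the number of occupied boxes centred at `(1 - e⁻ᶜ) n`, on the event that `n` Poisson boxes contain
`r` balls in total. -/
noncomputable def inversionIntegrand (c θ : ℝ) (n r : ℕ) (φ : ℝ) : ℂ :=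
  cexp (-(r * φ * I)) * boxCharFun c (θ * (√n)⁻¹) φ ^ n *
    cexp (-(√n * (1 - rexp (-c)) * θ * I))

lemma continuous_inversionIntegrand (c θ : ℝ) (n r : ℕ) :
    Continuous (inversionIntegrand c θ n r) := by
  have := continuous_boxCharFun c (θ * (√n)⁻¹)
  unfold inversionIntegrand
  fun_prop

lemma norm_inversionIntegrand (c θ : ℝ) (n r : ℕ) (φ : ℝ) :
    ‖inversionIntegrand c θ n r φ‖ = ‖boxCharFun c (θ * (√n)⁻¹) φ‖ ^ n := by
  simp [inversionIntegrand, Complex.norm_exp, -Complex.ofReal_exp]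

lemma inversionIntegrand_mul_inv_sqrt (c θ : ℝ) (n r : ℕ) (u : ℝ) :
    inversionIntegrand c θ n r (u * (√n)⁻¹) =
      centeredBoxCharFun c θ u (√n)⁻¹ ^ n * cexp (-(((r - c * n) / √n : ℝ) * u * I)) := by
  have hs : (n : ℂ) * (√n : ℂ)⁻¹ = √n := by
    exact_mod_cast Real.div_sqrt
  have phases : cexp (-(r * (u * (√n)⁻¹ : ℝ) * I)) * cexp (-(√n * (1 - rexp (-c)) * θ * I)) =
      cexp (n * -(((1 - rexp (-c)) * θ + c * u) * (√n)⁻¹ * I)) *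
        cexp (-(((r - c * n) / √n : ℝ) * u * I)) := by
    rw [← Complex.exp_add, ← Complex.exp_add]
    congr 1
    push_cast
    linear_combination (1 - cexp (-c)) * θ * I * hs
  rw [inversionIntegrand, centeredBoxCharFun, mul_pow, ← Complex.exp_nat_mul, mul_right_comm,
    phases]
  push_cast
  ring

lemma tendsto_inversionIntegrand {c : ℝ} {r : ℕ → ℕ}
    (hr : Tendsto (fun n : ℕ ↦ (r n - c * n) / √n) atTop (𝓝 0)) (θ u : ℝ) :
    Tendsto (fun n ↦ inversionIntegrand c θ n (r n) (u * (√n)⁻¹)) atTop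
      (𝓝 (rexp (-(θ ^ 2 * occupancyVariance c + c * (u + θ * rexp (-c)) ^ 2) / 2) : ℝ)) := by
  have box := tendsto_comp_inv_sqrt_pow (contDiff_centeredBoxCharFun c θ u)
    (centeredBoxCharFun_zero c θ u) (deriv_centeredBoxCharFun_zero c θ u)
  have phase : Tendsto (fun n : ℕ ↦ cexp (-(((r n - c * n) / √n : ℝ) * u * I))) atTop (𝓝 1) := by
    have : Continuous fun x : ℝ ↦ cexp (-(x * u * I)) := by fun_prop
    simpa [Function.comp_def] using (this.tendsto 0).comp hr
  simp only [inversionIntegrand_mul_inv_sqrt]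
  convert! box.mul phase using 2
  rw [iteratedDeriv_two_centeredBoxCharFun_zero]
  push_cast
  ring_nf

lemma integral_exp_neg_add_mul_sq_div_two (a b c : ℝ) :
    ∫ u : ℝ, rexp (-(a + c * (u + b) ^ 2) / 2) = √(2 * π / c) * rexp (-a / 2) := by
  have integrand (u : ℝ) :
      rexp (-(a + c * (u + b) ^ 2) / 2) = rexp (-a / 2) * rexp (-(c / 2) * (u + b) ^ 2) := by
    rw [← Real.exp_add]
    ring_nf
  simp only [integrand, integral_const_mul]
  rw [integral_add_right_eq_self fun u : ℝ ↦ rexp (-(c / 2) * u ^ 2), integral_gaussian, mul_comm,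
    div_div_eq_mul_div, mul_comm π]

lemma tendsto_sqrt_mul_integral_inversionIntegrand {c : ℝ} (hc : 0 < c) {r : ℕ → ℕ}
    (hr : Tendsto (fun n : ℕ ↦ (r n - c * n) / √n) atTop (𝓝 0)) (θ : ℝ) :
    Tendsto (fun n : ℕ ↦ √n * ∫ φ in -π..π, inversionIntegrand c θ n (r n) φ) atTop
      (𝓝 (√(2 * π / c) * rexp (-(θ ^ 2 * occupancyVariance c) / 2) : ℝ)) := by
  obtain ⟨δ, hδ, hbox⟩ := exists_norm_boxCharFun_le_exp_neg_mul_sq hc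
  have bound (n : ℕ) (φ : ℝ) (hφ : |φ| ≤ π) :
      ‖inversionIntegrand c θ n (r n) φ‖ ≤ rexp (-δ * (n * φ ^ 2)) :=
    calc ‖inversionIntegrand c θ n (r n) φ‖
        ≤ rexp (-δ * φ ^ 2) ^ n := by
          rw [norm_inversionIntegrand]
          gcongr
          exact hbox _ φ hφ
      _ = rexp (-δ * (n * φ ^ 2)) := by
          rw [← Real.exp_nat_mul]
          ring_nf
  have laplace := tendsto_sqrt_smul_intervalIntegral Real.pi_pos hδ
    (fun n ↦ continuous_inversionIntegrand c θ n (r n)) bound (tendsto_inversionIntegrand hr θ)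
  rwa [integral_complex_ofReal, integral_exp_neg_add_mul_sq_div_two] at laplace

lemma integral_inversionIntegrand {c : ℝ} (hc : 0 < c) (θ : ℝ) (n r : ℕ) :
    ∫ φ in -π..π, inversionIntegrand c θ n r φ =
      2 * π * (rexp (-(c * n)) * (c ^ r / r.factorial) : ℝ) * ∑ s : Fin r → Fin n,
        cexp (θ * ((distinctCount n r s - n * (1 - rexp (-c))) / √n : ℝ) * I) := by
  have hs : (n : ℂ) * (√n : ℂ)⁻¹ = √n := by
    exact_mod_cast Real.div_sqrt
  simp only [inversionIntegrand, intervalIntegral.integral_mul_const]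
  rw [integral_exp_neg_mul_boxCharFun_pow hc, mul_assoc, sum_mul]
  congr 1
  refine sum_congr rfl fun s _ ↦ ?_
  rw [← Complex.exp_add]
  congr 1
  push_cast
  linear_combination (1 - cexp (-c)) * θ * I * hs

/-- Both sums are multiplied by the same Poisson mass in the inversion formula, so their quotient
does not require its asymptotics. -/
lemma tendsto_sum_exp_distinctCount_div {c : ℝ} (hc : 0 < c) {r : ℕ → ℕ}
    (hr : Tendsto (fun n : ℕ ↦ (r n - c * n) / √n) atTop (𝓝 0)) (θ : ℝ) :
    Tendsto (fun n : ℕ ↦ (∑ s : Fin (r n) → Fin n,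
        cexp (θ * ((distinctCount n (r n) s - n * (1 - rexp (-c))) / √n : ℝ) * I)) /
          Fintype.card (Fin (r n) → Fin n)) atTop
      (𝓝 (rexp (-(θ ^ 2 * occupancyVariance c) / 2) : ℝ)) := by
  have limit (θ : ℝ) := tendsto_sqrt_mul_integral_inversionIntegrand hc hr θ
  simp only [integral_inversionIntegrand hc, ← mul_assoc] at limit
  have hne : (√(2 * π / c) * rexp (-(0 ^ 2 * occupancyVariance c) / 2) : ℝ) ≠ 0 := by positivity
  have quotient := (limit θ).div (limit 0) (by exact_mod_cast hne)
  have limit_eq : √(2 * π / c) * rexp (-(θ ^ 2 * occupancyVariance c) / 2) /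
      (√(2 * π / c) * rexp (-(0 ^ 2 * occupancyVariance c) / 2)) =
        rexp (-(θ ^ 2 * occupancyVariance c) / 2) := by
    rw [mul_div_mul_left _ _ (by positivity)]
    simp
  rw [← Complex.ofReal_div, limit_eq] at quotient
  refine quotient.congr' ?_
  filter_upwards [eventually_gt_atTop 0] with n hn
  have mass_ne : (√n * 2 * π * (rexp (-(c * n)) * (c ^ r n / (r n).factorial) : ℝ) : ℂ) ≠ 0 :=
    mod_cast (by positivity : √n * 2 * π * (rexp (-(c * n)) * (c ^ r n / (r n).factorial)) ≠ 0)
  rw [Pi.div_apply, mul_div_mul_left _ _ mass_ne]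
  simp

end LocalLimit

section UniformLaw

variable {α : Type*} [Fintype α] [Nonempty α]

/-- The law of `X x` for `x` uniform on the finite type `α`. -/
noncomputable def unifLaw (X : α → ℝ) : ProbabilityMeasure ℝ :=
  ⟨((PMF.uniformOfFintype α).map X).toMeasure, inferInstance⟩

lemma integral_unifLaw {E : Type*} [NormedAddCommGroup E] [NormedSpace ℝ E] [CompleteSpace E]
    (X : α → ℝ) {f : ℝ → E} (hf : StronglyMeasurable f) :
    ∫ x, f x ∂(unifLaw X : Measure ℝ) = (Fintype.card α : ℝ)⁻¹ • ∑ x, f (X x) := by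
  let : MeasurableSpace α := ⊤
  have law : (unifLaw X : Measure ℝ) = (PMF.uniformOfFintype α).toMeasure.map X :=
    (PMF.toMeasure_map _ _ measurable_from_top).symm
  rw [law, integral_map measurable_from_top.aemeasurable hf.aestronglyMeasurable,
    PMF.integral_eq_sum, smul_sum]
  simp

lemma charFun_unifLaw (X : α → ℝ) (t : ℝ) :
    charFun (unifLaw X : Measure ℝ) t = (∑ x, cexp (t * X x * I)) / Fintype.card α := by
  rw [charFun_apply_real, integral_unifLaw X (by fun_prop), Complex.real_smul, div_eq_inv_mul]
  push_cast
  rfl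

lemma integral_boundedContinuous_unifLaw (X : α → ℝ) (g : BoundedContinuousFunction ℝ ℝ) :
    ∫ x, g x ∂(unifLaw X : Measure ℝ) = unifExpect fun x ↦ g (X x) := by
  rw [integral_unifLaw X g.continuous.stronglyMeasurable, unifExpect, smul_eq_mul, div_eq_inv_mul]

end UniformLaw

section CentralLimit

lemma tendsto_natFloor_mul_sub_div_sqrt {c : ℝ} (hc : 0 ≤ c) :
    Tendsto (fun n : ℕ ↦ (⌊c * n⌋₊ - c * n) / √n) atTop (𝓝 0) := by
  have inv_sqrt := tendsto_nhds_of_tendsto_nhdsWithin tendsto_inv_sqrt_natCast_nhdsNE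
  refine squeeze_zero_norm (fun n ↦ ?_) inv_sqrt
  rw [norm_div, Real.norm_of_nonneg (Real.sqrt_nonneg _), ← one_div]
  gcongr
  rw [Real.norm_eq_abs, abs_le]
  constructor <;> linarith [Nat.floor_le (mul_nonneg hc n.cast_nonneg : 0 ≤ c * n),
    Nat.lt_floor_add_one (c * n)]

theorem occupancy_clt_general {c : ℝ} (hc : 0 < c) {r : ℕ → ℕ}
    (hr : Tendsto (fun n : ℕ ↦ (r n - c * n) / √n) atTop (𝓝 0))
    (g : BoundedContinuousFunction ℝ ℝ) :
    Tendsto (fun n : ℕ ↦ unifExpect fun s : Fin (r n) → Fin n ↦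
        g ((distinctCount n (r n) s - n * (1 - rexp (-c))) / √(n * occupancyVariance c)))
      atTop (𝓝 (∫ x, g x ∂gaussianReal 0 1)) := by
  set v := occupancyVariance c
  have hv : 0 < v := occupancyVariance_pos hc.ne'
  let X (n : ℕ) (s : Fin (r n) → Fin n) : ℝ :=
    (distinctCount n (r n) s - n * (1 - rexp (-c))) / √(n * v)
  let gaussian : ProbabilityMeasure ℝ := ⟨gaussianReal 0 1, inferInstance⟩
  have law_tendsto : Tendsto (fun n ↦ unifLaw (X (n + 1))) atTop (𝓝 gaussian) := by
    refine ProbabilityMeasure.tendsto_of_tendsto_charFun fun t ↦ ?_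
    have limit : charFun (gaussian : Measure ℝ) t = (rexp (-((t / √v) ^ 2 * v) / 2) : ℝ) := by
      rw [div_pow, Real.sq_sqrt hv.le, div_mul_cancel₀ _ hv.ne']
      simp [gaussian, charFun_gaussianReal, neg_div]
    have rescale (n : ℕ) (s : Fin (r n) → Fin n) : t * X n s =
        t / √v * ((distinctCount n (r n) s - n * (1 - rexp (-c))) / √n) := by
      simp only [X, Real.sqrt_mul n.cast_nonneg]
      ring
    rw [limit]
    convert! (tendsto_add_atTop_iff_nat 1).2 (tendsto_sum_exp_distinctCount_div hc hr (t / √v))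
      using 2 with n
    rw [charFun_unifLaw]
    simp only [← Complex.ofReal_mul, rescale]
  have expect_tendsto := ProbabilityMeasure.tendsto_iff_forall_integral_tendsto.1 law_tendsto g
  simp only [integral_boundedContinuous_unifLaw] at expect_tendsto
  exact (tendsto_add_atTop_iff_nat 1).1 expect_tendsto

end CentralLimit

/-- **Proposition (occupancy CLT).** For `c > 0`, the number of distinct values among
`⌊cn⌋` i.i.d. uniform samples from `[n]`, centered by `n(1 - e⁻ᶜ)` and scaled by
`√(n(e⁻ᶜ - (1+c)e⁻²ᶜ))`, converges in distribution (tested against every bounded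
continuous function) to a standard normal. -/
theorem occupancy_clt (c : ℝ) (hc : 0 < c) :
    ∀ g : BoundedContinuousFunction ℝ ℝ,
      Tendsto
        (fun n : ℕ =>
          unifExpect (fun s : Fin ⌊c * (n : ℝ)⌋₊ → Fin n =>
            g (((distinctCount n ⌊c * (n : ℝ)⌋₊ s : ℝ) - (n : ℝ) * (1 - Real.exp (-c))) /
              Real.sqrt ((n : ℝ) * (Real.exp (-c) - (1 + c) * Real.exp (-2 * c))))))
        atTop
        (𝓝 (∫ x, g x ∂(gaussianReal 0 1))) :=
  occupancy_clt_general hc (tendsto_natFloor_mul_sub_div_sqrt hc.le)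
end
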